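/- arXiv:2311.01121 — 3 statements merged into one kernel-verified Lean document; each statement's English description precedes it below -/
import Mathlib

section
/- Let C be a compact strictly convex planar body whose boundary is traced by a C^∞, λ-periodic, affinely parametrized curve x with affine curvature k. For each n ≥ 3, let 0 ≤ s_{n,1} < … < s_{n,n} < λ be parameters of the vertices of a best approximating inscribed polygon with at most n vertices, indices extended cyclically by s_{n,i+n} = s_{n,i} + λ, and set λ_{n,i} := s_{n,i} − s_{n,i−1}. Then λ_{n,i} = λ/n − (λ²/(30 n³))·∫₀^λ k(s) ds + (λ³/(30 n³))·k(s_{n,i}) + o(1/n³) uniformly in i; that is, lim_{n→∞} max_{1 ≤ i ≤ n} n³ · | λ_{n,i} − λ/n + (λ²/(30 n³))∫₀^λ k(s) ds − (λ³/(30 n³)) k(s_{n,i}) | = 0. -/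
open Filter MeasureTheory
open scoped Topology

/-- The standard area form on the plane: `ω(u,v) = u₁v₂ − u₂v₁`. -/
noncomputable def om (u v : ℝ × ℝ) : ℝ := u.1 * v.2 - u.2 * v.1


lemma volume_tri (a b p : ℝ × ℝ) :
    (volume (convexHull ℝ ({a, b, p} : Set (ℝ × ℝ)))).toReal =
      |om (b - a) (p - a)| *
        (volume (convexHull ℝ ({(0,0), (1,0), (0,1)} : Set (ℝ × ℝ)))).toReal := by
  set L : (ℝ × ℝ) →ₗ[ℝ] (ℝ × ℝ) := Matrix.toLin (Module.Basis.finTwoProd ℝ) (Module.Basis.finTwoProd ℝ)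
    !![(b-a).1, (p-a).1; (b-a).2, (p-a).2] with hL
  have hdet : LinearMap.det L = om (b - a) (p - a) := by
    rw [hL, LinearMap.det_toLin, Matrix.det_fin_two_of, om]; ring
  have h0 : L (0,0) = 0 := by ext <;> simp [hL, Matrix.toLin_finTwoProd_apply]
  have h1 : L (1,0) = b - a := by ext <;> simp [hL, Matrix.toLin_finTwoProd_apply]
  have h2 : L (0,1) = p - a := by ext <;> simp [hL, Matrix.toLin_finTwoProd_apply]
  have himg : convexHull ℝ ({a, b, p} : Set (ℝ × ℝ)) =
      (fun z => a + z) '' (L '' (convexHull ℝ ({(0,0), (1,0), (0,1)} : Set (ℝ × ℝ)))) := by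
    rw [LinearMap.image_convexHull]
    rw [show (fun z => a + z) = (AffineMap.const ℝ (ℝ × ℝ) a + AffineMap.id ℝ (ℝ × ℝ) :
      (ℝ × ℝ) →ᵃ[ℝ] (ℝ × ℝ)) from by ext <;> simp]
    rw [AffineMap.image_convexHull]
    simp [Set.image_insert_eq, h0, h1, h2]
  rw [himg, Set.image_add_left, measure_preimage_add, Measure.addHaar_image_linearMap, hdet,
    ENNReal.toReal_mul, ENNReal.toReal_ofReal (abs_nonneg _)]

lemma volume_std_pos :
    0 < (volume (convexHull ℝ ({(0,0), (1,0), (0,1)} : Set (ℝ × ℝ)))).toReal := by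
  have hfin : Set.Finite ({(0,0), (1,0), (0,1)} : Set (ℝ × ℝ)) := by simp
  apply ENNReal.toReal_pos
  · have hsub : Set.Ioo (0:ℝ) (1/2) ×ˢ Set.Ioo (0:ℝ) (1/2) ⊆
        (convexHull ℝ ({(0,0), (1,0), (0,1)} : Set (ℝ × ℝ))) := by
      rintro ⟨y, z⟩ ⟨⟨h1, h2⟩, h3, h4⟩
      simp only at h1 h2 h3 h4
      have hc := convex_convexHull ℝ ({(0,0), (1,0), (0,1)} : Set (ℝ × ℝ))
      have := hc.sum_mem (t := Finset.univ) (w := ![1 - y - z, y, z])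
        (z := ![((0:ℝ),(0:ℝ)), (1,0), (0,1)]) (by
          intro i _; fin_cases i <;> simp <;> linarith)
        (by simp [Fin.sum_univ_succ]) (by
          intro i _; apply subset_convexHull; fin_cases i <;> simp)
      simpa [Fin.sum_univ_succ] using this
    have hv : volume (Set.Ioo (0:ℝ) (1/2) ×ˢ Set.Ioo (0:ℝ) (1/2)) ≠ 0 := by
      rw [Measure.volume_eq_prod, Measure.prod_prod, Real.volume_Ioo]
      simp
    exact fun h => hv (measure_mono_null hsub h)
  · exact (hfin.isCompact_convexHull (𝕜 := ℝ)).measure_lt_top.ne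

lemma line_null (a d : ℝ × ℝ) (p : ℝ × ℝ) (hp : om d (p - a) ≠ 0) :
    volume {v : ℝ × ℝ | om d (v - a) = 0} = 0 := by
  let f : (ℝ × ℝ) →ₗ[ℝ] ℝ :=
    { toFun := om d
      map_add' := by intro u v; simp [om]; ring
      map_smul' := by intro c v; simp [om]; ring }
  have h : {v : ℝ × ℝ | om d (v - a) = 0} =
      (AffineSubspace.mk' a (LinearMap.ker f) : Set (ℝ × ℝ)) := by
    ext v
    simp [AffineSubspace.mem_mk', f]
  rw [h]
  apply Measure.addHaar_affineSubspace
  intro htop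
  have : p ∈ AffineSubspace.mk' a (LinearMap.ker f) := by rw [htop]; trivial
  rw [AffineSubspace.mem_mk'] at this
  exact hp (by simpa [f] using this)

lemma om_comb (d a p v : ℝ × ℝ) (α β : ℝ) (h : α + β = 1) :
    om d (α • p + β • v - a) = α * om d (p - a) + β * om d (v - a) := by
  have : α = 1 - β := by linarith
  subst this
  simp [om]; ring

lemma line_seg {C : Set (ℝ × ℝ)} (hconv : StrictConvex ℝ C)
    {a b q : ℝ × ℝ} (ha : a ∈ frontier C) (hb : b ∈ frontier C) (haC : a ∈ C) (hbC : b ∈ C)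
    (hab : a ≠ b) (hq : q ∈ C) (hl : om (b - a) (q - a) = 0) : q ∈ segment ℝ a b := by
  have hne : b - a ≠ 0 := sub_ne_zero.mpr hab.symm
  obtain ⟨r, hr⟩ : ∃ r : ℝ, q = a + r • (b - a) := by
    have h2 : (b - a).1 ≠ 0 ∨ (b - a).2 ≠ 0 := by
      by_contra! h; exact hne (Prod.ext h.1 h.2)
    simp only [om] at hl
    rcases h2 with h2 | h2
    · refine ⟨(q - a).1 / (b - a).1, ?_⟩
      ext
      · simp at h2 ⊢; field_simp; ring
      · simp at h2 hl ⊢; field_simp; linarith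
    · refine ⟨(q - a).2 / (b - a).2, ?_⟩
      ext
      · simp at h2 hl ⊢; field_simp; linarith
      · simp at h2 ⊢; field_simp; ring
  by_cases h0 : r < 0
  · exfalso
    have haq : b ≠ q := by
      intro h; rw [hr] at h
      have : (1 - r) • (b - a) = 0 := by rw [sub_smul, one_smul]; nth_rw 1 [h]; simp
      rcases smul_eq_zero.mp this with h | h
      · linarith
      · exact hne h
    have : a ∈ interior C := by
      have : 1 - r ≠ 0 := by linarith
      convert hconv hbC hq haq (show 0 < -r / (1 - r) from by apply div_pos <;> linarith)
        (show 0 < 1 / (1 - r) from by apply div_pos <;> linarith) (by field_simp; ring) using 1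
      rw [hr]; ext <;> simp <;> field_simp <;> ring
    exact ha.2 this
  by_cases h1 : 1 < r
  · exfalso
    have haq : a ≠ q := by
      intro h; rw [hr] at h
      have : r • (b - a) = 0 := by simpa using h
      rcases smul_eq_zero.mp this with h | h
      · linarith
      · exact hne h
    have : b ∈ interior C := by
      have : r ≠ 0 := by linarith
      convert hconv haC hq haq (show 0 < 1 - 1 / r from by
          rw [sub_pos, div_lt_one] <;> linarith)
        (show 0 < 1 / r from by apply div_pos <;> linarith) (by field_simp; ring) using 1
      rw [hr]; ext <;> simp <;> field_simp <;> ring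
    exact hb.2 this
  · rw [segment_eq_image']
    exact ⟨r, ⟨by linarith, by linarith⟩, hr.symm⟩

lemma ear {C : Set (ℝ × ℝ)} (hconv : StrictConvex ℝ C)
    {V : Set (ℝ × ℝ)} (hVf : V.Finite) (hVC : V ⊆ C) {a b p : ℝ × ℝ}
    (ha : a ∈ frontier C) (hb : b ∈ frontier C) (haV : a ∈ V) (hbV : b ∈ V)
    (hab : a ≠ b) (hp : p ∈ C) (hpos : ∀ v ∈ V, 0 ≤ om (b - a) (v - a))
    (hneg : om (b - a) (p - a) < 0) :
    (volume (convexHull ℝ (insert p V))).toReal = (volume (convexHull ℝ V)).toReal +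
      |om (b - a) (p - a)| *
        (volume (convexHull ℝ ({(0,0), (1,0), (0,1)} : Set (ℝ × ℝ)))).toReal := by
  have hVne : V.Nonempty := ⟨a, haV⟩
  have hhull : ∀ v ∈ convexHull ℝ V, 0 ≤ om (b - a) (v - a) := by
    have hcv : Convex ℝ {v : ℝ × ℝ | 0 ≤ om (b - a) (v - a)} := by
      intro y hy z hz α β hα hβ h
      simp only [Set.mem_ofPred_eq] at *
      rw [om_comb _ _ _ _ _ _ h]; positivity
    exact convexHull_min hpos hcv
  have htri : ∀ v ∈ convexHull ℝ ({a, b, p} : Set (ℝ × ℝ)), om (b - a) (v - a) ≤ 0 := by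
    have hcv : Convex ℝ {v : ℝ × ℝ | om (b - a) (v - a) ≤ 0} := by
      intro y hy z hz α β hα hβ h
      simp only [Set.mem_ofPred_eq] at *
      rw [om_comb _ _ _ _ _ _ h]; nlinarith
    refine convexHull_min ?_ hcv
    rintro v (rfl | rfl | rfl)
    · show om _ _ ≤ 0
      simp [om]
    · show om _ _ ≤ 0
      simp [om, mul_comm]
    · exact hneg.le
  have hCconv := hconv.convex
  have hVhC : convexHull ℝ V ⊆ C := convexHull_min hVC hCconv
  have hunion : convexHull ℝ (insert p V) = convexHull ℝ V ∪ convexHull ℝ ({a, b, p} : Set (ℝ × ℝ)) := by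
    apply Set.Subset.antisymm
    · intro y hy
      rw [convexHull_insert hVne, mem_convexJoin] at hy
      obtain ⟨p', hp', v, hv, hy⟩ := hy
      rw [Set.mem_singleton_iff] at hp'; subst hp'
      set A := om (b - a) (p' - a) with hA
      set B := om (b - a) (v - a) with hB
      have hB0 : 0 ≤ B := hhull v hv
      -- crossing point
      have hAB : 0 < B - A := by linarith
      set q : ℝ × ℝ := (B / (B - A)) • p' + (-A / (B - A)) • v with hq
      have hsum : B / (B - A) + -A / (B - A) = 1 := by field_simp; ring
      have c1 : 0 ≤ B / (B - A) := by positivity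
      have c2 : 0 < -A / (B - A) := div_pos (by linarith) hAB
      have hqC : q ∈ C := hCconv hp (hVhC hv) c1 c2.le hsum
      have hql : om (b - a) (q - a) = 0 := by
        rw [hq, om_comb _ _ _ _ _ _ hsum, ← hA, ← hB]; field_simp; ring
      have hqs := line_seg hconv ha hb (hVC haV) (hVC hbV) hab hqC hql
      have hqV : q ∈ convexHull ℝ V :=
        (convex_convexHull ℝ V).segment_subset (subset_convexHull _ _ haV)
          (subset_convexHull _ _ hbV) hqs
      have hqT : q ∈ convexHull ℝ ({a, b, p'} : Set (ℝ × ℝ)) :=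
        (convex_convexHull ℝ _).segment_subset (subset_convexHull _ _ (by simp))
          (subset_convexHull _ _ (by simp)) hqs
      have hpT : p' ∈ convexHull ℝ ({a, b, p'} : Set (ℝ × ℝ)) := subset_convexHull _ _ (by simp)
      obtain ⟨α, β, hα, hβ, hαβ, rfl⟩ := hy
      by_cases hc : α ≤ B / (B - A)
      · left
        -- y between q and v
        rcases eq_or_lt_of_le c1 with hz | hz
        · have : α = 0 := by linarith
          have : β = 1 := by linarith
          subst α; subst β; simpa using hv
        have hα' : 0 ≤ α / (B / (B - A)) := by positivity
        have hβ' : 0 ≤ 1 - α / (B / (B - A)) := by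
          rw [sub_nonneg, div_le_one hz]; exact hc
        have := convex_convexHull ℝ V hqV hv hα' hβ' (by ring)
        have he : α • p' + β • v = (α / (B / (B - A))) • q + (1 - α / (B / (B - A))) • v := by
          have hβ2 : β = 1 - α := by linarith
          have h3 : -A / (B - A) = 1 - B / (B - A) := by linarith
          rw [hq, h3, hβ2]
          generalize B / (B - A) = γ at *
          ext <;> simp <;> field_simp <;> ring
        rw [he]; exact this
      · right
        push Not at hc
        have hα' : 0 ≤ β / (-A / (B - A)) := by positivity
        have hβ' : 0 ≤ 1 - β / (-A / (B - A)) := by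
          rw [sub_nonneg, div_le_one c2]; linarith
        have := convex_convexHull ℝ _ hqT hpT hα' hβ' (by ring)
        have he : α • p' + β • v = (β / (-A / (B - A))) • q + (1 - β / (-A / (B - A))) • p' := by
          have hβ2 : α = 1 - β := by linarith
          have h3 : B / (B - A) = 1 - -A / (B - A) := by linarith
          rw [hq, h3, hβ2]
          generalize -A / (B - A) = γ at *
          ext <;> simp <;> field_simp <;> ring
        rw [he]; exact this
    · apply Set.union_subset
      · exact convexHull_mono (Set.subset_insert _ _)
      · apply convexHull_mono
        rintro v (rfl | rfl | rfl)
        · right; exact haV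
        · right; exact hbV
        · left; rfl
  have hf3 : Set.Finite ({a, b, p} : Set (ℝ × ℝ)) := by simp
  have hc1 := (hVf.isCompact_convexHull (𝕜 := ℝ))
  have hc2 := (hf3.isCompact_convexHull (𝕜 := ℝ))
  have hdisj : AEDisjoint volume (convexHull ℝ V) (convexHull ℝ ({a, b, p} : Set (ℝ × ℝ))) := by
    refine measure_mono_null ?_ (line_null a (b - a) p hneg.ne)
    rintro v ⟨h1, h2⟩
    exact le_antisymm (htri v h2) (hhull v h1)
  rw [hunion, measure_union₀ hc2.isClosed.measurableSet.nullMeasurableSet hdisj,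
    ENNReal.toReal_add hc1.measure_lt_top.ne hc2.measure_lt_top.ne, volume_tri]

lemma om_bound (u v : ℝ × ℝ) : |om u v| ≤ 2 * ‖u‖ * ‖v‖ := by
  have h1 : |u.1| ≤ ‖u‖ := norm_fst_le u
  have h2 : |u.2| ≤ ‖u‖ := norm_snd_le u
  have h3 : |v.1| ≤ ‖v‖ := norm_fst_le v
  have h4 : |v.2| ≤ ‖v‖ := norm_snd_le v
  calc |om u v| ≤ |u.1 * v.2| + |u.2 * v.1| := abs_sub _ _
    _ = |u.1| * |v.2| + |u.2| * |v.1| := by rw [abs_mul, abs_mul]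
    _ ≤ ‖u‖ * ‖v‖ + ‖u‖ * ‖v‖ := by gcongr
    _ = _ := by ring

lemma om_deriv {f g : ℝ → ℝ × ℝ} {f' g' : ℝ × ℝ} {t : ℝ} (hf : HasDerivAt f f' t)
    (hg : HasDerivAt g g' t) :
    HasDerivAt (fun t => om (f t) (g t)) (om f' (g t) + om (f t) g') t := by
  have a1 := hf.hasFDerivAt.fst.hasDerivAt
  have a2 := hf.hasFDerivAt.snd.hasDerivAt
  have b1 := hg.hasFDerivAt.fst.hasDerivAt
  have b2 := hg.hasFDerivAt.snd.hasDerivAt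
  have := (a1.mul b2).sub (a2.mul b1)
  refine this.congr_deriv ?_
  simp [om]
  ring

lemma iter_hasDeriv {x : ℝ → ℝ × ℝ} (hx : ContDiff ℝ (⊤ : ℕ∞) x) (m : ℕ) (t : ℝ) :
    HasDerivAt (iteratedDeriv m x) (iteratedDeriv (m+1) x t) t := by
  rw [iteratedDeriv_succ]
  exact ((hx.differentiable_iteratedDeriv m (by exact_mod_cast WithTop.coe_lt_top m)) t).hasDerivAt

lemma per_bounded {E : Type*} [NormedAddCommGroup E] {f : ℝ → E} {lam : ℝ} (hlam : 0 < lam)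
    (hf : Continuous f) (hp : Function.Periodic f lam) : ∃ K > 0, ∀ t, ‖f t‖ ≤ K := by
  have hc : IsCompact (Set.range f) := hp.compact_of_continuous hlam.ne' hf
  obtain ⟨K, hK⟩ := hc.isBounded.exists_norm_le
  exact ⟨max K 1, by positivity, fun t => (hK _ ⟨t, rfl⟩).trans (le_max_left _ _)⟩

lemma iter_periodic {x : ℝ → ℝ × ℝ} {lam : ℝ} (hper : ∀ t : ℝ, x (t + lam) = x t) (m : ℕ) :
    Function.Periodic (iteratedDeriv m x) lam := by
  intro t
  have : (fun z => x (z + lam)) = x := funext hper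
  have h2 := iteratedDeriv_comp_add_const m x lam
  rw [this] at h2
  exact (congrFun h2 t).symm

lemma taylor1 {g g' : ℝ → ℝ} (hg : ∀ h, HasDerivAt g (g' h) h) (h0 : g 0 = 0) {K : ℝ}
    (m : ℕ) (hb : ∀ h, |g' h| ≤ K * |h| ^ m) (h : ℝ) : |g h| ≤ K * |h| ^ (m + 1) := by
  have hK : 0 ≤ K := by
    have := (abs_nonneg _).trans (hb 1); simpa using this
  have := Convex.norm_image_sub_le_of_norm_hasDerivWithin_le (𝕜 := ℝ) (f := g) (f' := g')
    (s := Set.Icc (-|h|) |h|) (x := 0) (y := h) (C := K * |h| ^ m)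
    (fun y _ => (hg y).hasDerivWithinAt) (by
      intro y hy
      have hy' : |y| ≤ |h| := abs_le.mpr hy
      exact (hb y).trans (by gcongr)) (convex_Icc _ _)
      (by constructor <;> simp) ⟨neg_abs_le h, le_abs_self h⟩
  simp only [h0, sub_zero, Real.norm_eq_abs] at this
  rw [pow_succ, ← mul_assoc]; exact this

lemma taylorF {x : ℝ → ℝ × ℝ} {lam : ℝ} (hlam : 0 < lam)
    (hx : ContDiff ℝ (⊤ : ℕ∞) x)
    (haff : ∀ t : ℝ, om (deriv x t) (iteratedDeriv 2 x t) = 1)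
    (hper : ∀ t : ℝ, x (t + lam) = x t)
    {k : ℝ → ℝ} (hk : ∀ t : ℝ, k t = om (iteratedDeriv 2 x t) (iteratedDeriv 3 x t)) :
    ∃ k1 : ℝ → ℝ, ∃ K > 0, (∀ t, |k t| ≤ K) ∧ (∀ t, |k1 t| ≤ K) ∧ (∀ t, HasDerivAt k (k1 t) t) ∧
      (∀ s h, |k (s + h) - k s - k1 s * h| ≤ K * |h| ^ 2) ∧
      (∀ s h, |om (deriv x s) (x (s+h) - x s) - h^2/2 + k s * h^4/24 + k1 s * h^5/60|
        ≤ K * |h|^6) := by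
  have hD := iter_hasDeriv hx
  have hB : ∀ m, ∃ K > 0, ∀ t, ‖iteratedDeriv m x t‖ ≤ K := fun m =>
    per_bounded hlam (hx.continuous_iteratedDeriv m (by exact_mod_cast le_top)) (iter_periodic hper m)
  choose B hBpos hB using hB
  have hob : ∀ m l s t, |om (iteratedDeriv m x s) (iteratedDeriv l x t)| ≤ 2 * B m * B l := by
    intro m l s t
    refine (om_bound _ _).trans ?_
    have := hBpos m
    have := hB m s
    have := hB l t
    gcongr
  set p := fun m => iteratedDeriv m x with hp
  have hpd : ∀ m t, HasDerivAt (p m) (p (m+1) t) t := hD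
  have h12 : ∀ t, om (p 1 t) (p 2 t) = 1 := by intro t; simpa [hp, iteratedDeriv_one] using haff t
  have h13 : ∀ t, om (p 1 t) (p 3 t) = 0 := by
    intro t
    have h1 := om_deriv (hpd 1 t) (hpd 2 t)
    have h2 : HasDerivAt (fun t => om (p 1 t) (p 2 t)) 0 t := by
      simp only [h12]; exact hasDerivAt_const _ _
    have := h1.unique h2
    simp only [om] at this ⊢; linarith
  have hk' : ∀ t, k t = om (p 2 t) (p 3 t) := hk
  have hkf : k = fun t => om (p 2 t) (p 3 t) := funext hk
  have h14 : ∀ t, om (p 1 t) (p 4 t) = - k t := by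
    intro t
    have h1 := om_deriv (hpd 1 t) (hpd 3 t)
    have h2 : HasDerivAt (fun t => om (p 1 t) (p 3 t)) 0 t := by
      simp only [h13]; exact hasDerivAt_const _ _
    have := h1.unique h2
    rw [hk']
    simp only [om] at this ⊢; linarith
  have hkd : ∀ t, HasDerivAt k (om (p 2 t) (p 4 t)) t := by
    intro t
    have h1 := om_deriv (hpd 2 t) (hpd 3 t)
    rw [hkf]
    refine h1.congr_deriv ?_
    simp only [om]; ring
  have h15 : ∀ t, om (p 1 t) (p 5 t) = - 2 * om (p 2 t) (p 4 t) := by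
    intro t
    have h1 := om_deriv (hpd 1 t) (hpd 4 t)
    have h2 : HasDerivAt (fun t => om (p 1 t) (p 4 t)) (-(om (p 2 t) (p 4 t))) t := by
      simp only [h14]; exact (hkd t).neg
    have := h1.unique h2
    simp only [om] at this ⊢; linarith
  refine ⟨fun t => om (p 2 t) (p 4 t),
    2 * B 2 * B 3 + 2 * B 2 * B 4 + (2 * B 3 * B 4 + 2 * B 2 * B 5) + 2 * B 1 * B 6, ?_, ?_, ?_,
    hkd, ?_, ?_⟩
  · have := hBpos; have := this 1; have := hBpos 2; have := hBpos 3; have := hBpos 4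
    have := hBpos 5; have := hBpos 6; positivity
  all_goals
    have b1 := hBpos 1
    have b2 := hBpos 2
    have b3 := hBpos 3
    have b4 := hBpos 4
    have b5 := hBpos 5
    have b6 := hBpos 6
    have q1 : 0 < B 2 * B 3 := by positivity
    have q2 : 0 < B 2 * B 4 := by positivity
    have q3 : 0 < B 3 * B 4 := by positivity
    have q4 : 0 < B 2 * B 5 := by positivity
    have q5 : 0 < B 1 * B 6 := by positivity
  · intro t; rw [hk]
    have := hob 2 3 t t
    linarith
  · intro t
    have := hob 2 4 t t
    simp only [hp]
    linarith
  · intro s h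
    have hd : ∀ h, HasDerivAt (fun h => om (p 2 (s+h)) (p 4 (s+h)) - om (p 2 s) (p 4 s))
        (om (p 3 (s+h)) (p 4 (s+h)) + om (p 2 (s+h)) (p 5 (s+h))) h := by
      intro h
      exact (om_deriv ((hpd 2 (s+h)).comp_const_add s h)
        ((hpd 4 (s+h)).comp_const_add s h)).sub_const _
    have c1 := taylor1 hd (by simp) 0
      (K := 2 * B 2 * B 3 + 2 * B 2 * B 4 + (2 * B 3 * B 4 + 2 * B 2 * B 5) + 2 * B 1 * B 6) (by
      intro h
      have e1 := hob 3 4 (s+h) (s+h)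
      have e2 := hob 2 5 (s+h) (s+h)
      have := abs_add_le (om (p 3 (s+h)) (p 4 (s+h))) (om (p 2 (s+h)) (p 5 (s+h)))
      simp only [hp] at this ⊢
      rw [pow_zero, mul_one]
      linarith)
    have hd2 : ∀ h, HasDerivAt (fun h => k (s+h) - k s - om (p 2 s) (p 4 s) * h)
        (om (p 2 (s+h)) (p 4 (s+h)) - om (p 2 s) (p 4 s)) h := by
      intro h
      have := (((hkd (s+h)).comp_const_add s h).sub_const (k s)).sub
        ((hasDerivAt_id h).const_mul (om (p 2 s) (p 4 s)))
      exact this.congr_deriv (by simp)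
    exact taylor1 hd2 (by simp) 1 c1 h
  · intro s h
    set K := 2 * B 2 * B 3 + 2 * B 2 * B 4 + (2 * B 3 * B 4 + 2 * B 2 * B 5) + 2 * B 1 * B 6
    set κ := k s
    set κ' := om (p 2 s) (p 4 s) with hκ'
    have hq : ∀ m h, HasDerivAt (fun h => om (p 1 s) (p m (s+h))) (om (p 1 s) (p (m+1) (s+h))) h := by
      intro m h
      have := om_deriv (hasDerivAt_const h (p 1 s)) ((hpd m (s+h)).comp_const_add s h)
      refine this.congr_deriv ?_
      simp [om]
    have hpw : ∀ (m : ℕ) (c h : ℝ), HasDerivAt (fun h : ℝ => c * h ^ (m+1)) (c * ((m+1) * h ^ m)) h := by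
      intro m c h
      have := (hasDerivAt_pow (m+1) h).const_mul c
      simpa using this
    have t5 := taylor1 (g := fun h => om (p 1 s) (p 5 (s+h)) + 2 * κ')
      (g' := fun h => om (p 1 s) (p 6 (s+h))) (fun h => (hq 5 h).add_const _)
      (by simp [h15, hκ']) 0 (K := K) (by
        intro h
        have := hob 1 6 s (s+h)
        simp only [hp]
        rw [pow_zero, mul_one]
        linarith)
    have t4 := taylor1 (g := fun h => om (p 1 s) (p 4 (s+h)) + κ + 2 * κ' * h ^ (0+1)) (fun h =>
      (((hq 4 h).add_const κ).add (hpw 0 (2 * κ') h)).congr_deriv (by simp)) (by simp [h14, κ])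
      1 t5
    have t3 := taylor1 (g := fun h => om (p 1 s) (p 3 (s+h)) + κ * h^(0+1) + κ' * h ^ (1+1)) (fun h =>
      (((hq 3 h).add (hpw 0 κ h)).add (hpw 1 κ' h)).congr_deriv (by norm_num; ring)) (by simp [h13])
      2 t4
    have t2 := taylor1 (g := fun h => om (p 1 s) (p 2 (s+h)) - 1 + κ/2 * h^(1+1) + κ'/3 * h ^ (2+1))
      (fun h => ((((hq 2 h).sub_const 1).add (hpw 1 (κ/2) h)).add (hpw 2 (κ'/3) h)).congr_deriv
        (by norm_num; ring)) (by simp [h12])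
      3 t3
    have t1 := taylor1 (g := fun h => om (p 1 s) (p 1 (s+h)) - 1 * h^(0+1) + κ/6 * h^(2+1) + κ'/12 * h ^ (3+1))
      (fun h => ((((hq 1 h).sub (hpw 0 1 h)).add (hpw 2 (κ/6) h)).add (hpw 3 (κ'/12) h)).congr_deriv
        (by norm_num; ring)) (by simp [om]; ring)
      4 t2
    have t0 := taylor1 (g := fun h => om (p 1 s) (p 0 (s+h)) - om (p 1 s) (p 0 s) - 1/2 * h^(1+1) + κ/24 * h^(3+1) + κ'/60 * h ^ (4+1))
      (fun h => (((((hq 0 h).sub_const _).sub (hpw 1 (1/2) h)).add (hpw 3 (κ/24) h)).add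
        (hpw 4 (κ'/60) h)).congr_deriv
        (by norm_num; ring)) (by simp)
      5 t1 h
    refine le_trans (le_of_eq ?_) t0
    have e1 : p 0 = x := by simp [hp]
    have e2 : p 1 = deriv x := by simp [hp, iteratedDeriv_one]
    rw [e1, e2]
    beta_reduce
    rw [← hκ']
    clear_value κ κ'
    congr 1
    simp only [om, Prod.fst_sub, Prod.snd_sub]
    ring

lemma mem_fr {x : ℝ → ℝ × ℝ} {lam : ℝ} (hlam : 0 < lam) (hper : ∀ t : ℝ, x (t + lam) = x t)
    {C : Set (ℝ × ℝ)} (hbd : x '' Set.Icc 0 lam = frontier C) (t : ℝ) : x t ∈ frontier C := by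
  rw [← hbd]
  obtain ⟨y, hy, h⟩ := Function.Periodic.exists_mem_Ico₀ (f := x) (c := lam) hper hlam t
  exact ⟨y, ⟨hy.1, hy.2.le⟩, h.symm⟩

lemma inj_per {x : ℝ → ℝ × ℝ} {lam : ℝ} (hlam : 0 < lam) (hper : ∀ t : ℝ, x (t + lam) = x t)
    (hinj : Set.InjOn x (Set.Ico 0 lam)) {u v : ℝ} (huv : u < v) (hv : v < u + lam) :
    x u ≠ x v := by
  intro h
  have hp : Function.Periodic x lam := hper
  set m := ⌊u / lam⌋
  set u' := u - m * lam
  have hu0 : 0 ≤ u' := by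
    have : (m : ℝ) ≤ u / lam := Int.floor_le _
    rw [le_div_iff₀ hlam] at this; simp only [u']; linarith
  have hu1 : u' < lam := by
    have : u / lam < m + 1 := Int.lt_floor_add_one _
    rw [div_lt_iff₀ hlam] at this; simp only [u']; linarith
  have hxu : x u' = x u := hp.sub_int_mul_eq m
  have hxv : x (v - m * lam) = x v := hp.sub_int_mul_eq m
  by_cases hc : v - m * lam < lam
  · have := hinj (x₁ := u') ⟨hu0, hu1⟩ (x₂ := v - m * lam) ⟨by linarith, hc⟩ (by rw [hxu, hxv, h])
    linarith
  · push Not at hc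
    have h2 : x (v - m * lam - lam) = x v := by rw [hp.sub_eq, hxv]
    have := hinj (x₁ := u') ⟨hu0, hu1⟩ (x₂ := v - m * lam - lam) ⟨by linarith, by linarith⟩
      (by rw [hxu, h2, h])
    linarith

lemma orient {x : ℝ → ℝ × ℝ} {lam : ℝ} (hlam : 0 < lam)
    (hx : ContDiff ℝ (⊤ : ℕ∞) x)
    (haff : ∀ t : ℝ, om (deriv x t) (iteratedDeriv 2 x t) = 1)
    (hper : ∀ t : ℝ, x (t + lam) = x t)
    (hinj : Set.InjOn x (Set.Ico 0 lam))
    {C : Set (ℝ × ℝ)} (hcomp : IsCompact C) (hconv : StrictConvex ℝ C)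
    (hbd : x '' Set.Icc 0 lam = frontier C) {u v w : ℝ} (huv : u < v) (hvw : v < w)
    (hwu : w < u + lam) : 0 < om (x v - x u) (x w - x u) := by
  have hfr := mem_fr hlam hper hbd
  have hfC : ∀ t, x t ∈ C := fun t => hcomp.isClosed.frontier_subset (hfr t)
  have hne : ∀ u v w : ℝ, u < v → v < w → w < u + lam → om (x v - x u) (x w - x u) ≠ 0 := by
    intro u v w huv hvw hwu h0
    have hseg := line_seg hconv (hfr u) (hfr v) (hfC u) (hfC v)
      (inj_per hlam hper hinj huv (by linarith)) (hfC w) h0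
    have h1 : x u ≠ x w := inj_per hlam hper hinj (by linarith) (by linarith)
    have h2 : x v ≠ x w := inj_per hlam hper hinj (by linarith) (by linarith)
    have hop : x w ∈ openSegment ℝ (x u) (x v) :=
      mem_openSegment_of_ne_left_right h1 h2 hseg
    exact (hfr w).2 (hconv.openSegment_subset (hfC u) (hfC v)
      (inj_per hlam hper hinj huv (by linarith)) hop)
  -- a positive point
  obtain ⟨k1, K, hK, hk0, hk1, -, -, hT⟩ := taylorF hlam hx haff hper
    (k := fun t => om (iteratedDeriv 2 x t) (iteratedDeriv 3 x t)) (fun _ => rfl)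
  obtain ⟨h, hh0, hhl, hF⟩ : ∃ h : ℝ, 0 < h ∧ h < lam ∧ 0 < om (deriv x 0) (x (0 + h) - x 0) := by
    refine ⟨min (lam / 2) (min 1 (1 / (4 * K))), by positivity,
      (min_le_left _ _).trans_lt (by linarith), ?_⟩
    set h := min (lam / 2) (min 1 (1 / (4 * K))) with hh
    have h0 : 0 < h := by positivity
    have h1 : h ≤ 1 := (min_le_right _ _).trans (min_le_left _ _)
    have h2 : h ≤ 1 / (4 * K) := (min_le_right _ _).trans (min_le_right _ _)
    have h3 : K * h ≤ 1 / 4 := by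
      rw [le_div_iff₀ (by positivity)] at h2; linarith
    have t := (abs_le.mp (hT 0 h)).1
    rw [abs_of_pos h0] at t
    have a1 := (abs_le.mp (hk0 0)).2
    have a2 := (abs_le.mp (hk1 0)).2
    have p4 : h^4 ≤ h^3 := pow_le_pow_of_le_one h0.le h1 (by norm_num)
    have p5 : h^5 ≤ h^3 := pow_le_pow_of_le_one h0.le h1 (by norm_num)
    have p6 : h^6 ≤ h^3 := pow_le_pow_of_le_one h0.le h1 (by norm_num)
    have b1 : om (iteratedDeriv 2 x 0) (iteratedDeriv 3 x 0) * h^4 ≤ K * h^3 := by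
      calc _ ≤ K * h^4 := by gcongr
        _ ≤ _ := by gcongr
    have b2 : k1 0 * h^5 ≤ K * h^3 := by
      calc _ ≤ K * h^5 := by gcongr
        _ ≤ _ := by gcongr
    have b3 : K * h^6 ≤ K * h^3 := by gcongr
    have b4 : K * h^3 ≤ 1/4 * h^2 := by
      calc _ = (K * h) * h^2 := by ring
        _ ≤ _ := by gcongr
    have : 0 < h^2 := by positivity
    linarith
  simp only [zero_add] at hF
  have hxd : Differentiable ℝ x := hx.differentiable (by simp)
  have hxc := hxd.continuous
  obtain ⟨v0, hv0, hv0h, hpos⟩ : ∃ v0, 0 < v0 ∧ v0 < h ∧ 0 < om (x v0 - x 0) (x h - x 0) := by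
    by_contra! hcon
    have hd : HasDerivAt (fun v => om (x v - x 0) (x h - x 0)) (om (deriv x 0) (x h - x 0)) 0 := by
      refine (om_deriv ((hxd 0).hasDerivAt.sub_const (x 0))
        (hasDerivAt_const (0:ℝ) (x h - x 0))).congr_deriv ?_
      simp [om]
    have ht := hd.tendsto_slope_zero_right
    have hle : om (deriv x 0) (x h - x 0) ≤ 0 := by
      refine le_of_tendsto ht ?_
      filter_upwards [Ioo_mem_nhdsGT hh0] with t ht
      have := hcon t ht.1 ht.2
      have h00 : om (x 0 - x 0) (x h - x 0) = 0 := by simp [om]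
      simp only [zero_add, h00, sub_zero, smul_eq_mul]
      have : 0 < t⁻¹ := inv_pos.mpr ht.1
      nlinarith
    linarith
  -- connectedness
  let Ω : Set (ℝ × ℝ × ℝ) := {z | z.1 < z.2.1 ∧ z.2.1 < z.2.2 ∧ z.2.2 < z.1 + lam}
  have hΩ : Convex ℝ Ω := by
    rintro ⟨a1, a2, a3⟩ ⟨h1, h2, h3⟩ ⟨b1, b2, b3⟩ ⟨g1, g2, g3⟩ α β hα hβ hαβ
    simp only at h1 h2 h3 g1 g2 g3
    have key : ∀ p q r s : ℝ, p < q → r < s → α * p + β * r < α * q + β * s := by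
      intro p q r s hpq hrs
      rcases eq_or_lt_of_le hα with h | h
      · have : β = 1 := by linarith
        rw [← h, this]; linarith
      · nlinarith
    refine ⟨?_, ?_, ?_⟩
    · simpa using key _ _ _ _ h1 g1
    · simpa using key _ _ _ _ h2 g2
    · have := key _ _ _ _ h3 g3
      have e : α * (a1 + lam) + β * (b1 + lam) = α * a1 + β * b1 + lam := by
        linear_combination lam * hαβ
      simpa using this.trans_eq e
  by_contra! hneg
  have hDc : ContinuousOn (fun z : ℝ × ℝ × ℝ => om (x z.2.1 - x z.1) (x z.2.2 - x z.1)) Ω := by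
    unfold om; fun_prop
  have := hΩ.isPreconnected.intermediate_value (a := (u, v, w)) (b := (0, v0, h))
    ⟨huv, hvw, hwu⟩ ⟨hv0, hv0h, by simpa using hhl⟩ hDc
  obtain ⟨z, hz, hz0⟩ := this (show (0:ℝ) ∈ _ from ⟨hneg, hpos.le⟩)
  exact hne _ _ _ hz.1 hz.2.1 hz.2.2 hz0

lemma s_strictMono {lam : ℝ} {n : ℕ} (hn : 3 ≤ n) {s : ℤ → ℝ} (hs0 : 0 ≤ s 1)
    (hmono : ∀ i : ℤ, 1 ≤ i → i < (n : ℤ) → s i < s (i + 1))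
    (hlast : s (n : ℤ) < lam) (hcyc : ∀ i : ℤ, s (i + (n : ℤ)) = s i + lam) : StrictMono s := by
  apply strictMono_int_of_lt_succ
  have hc : ∀ (m : ℤ) (i : ℤ), s (i + m * n) = s i + m * lam := by
    intro m
    induction m using Int.induction_on with
    | zero => intro i; simp
    | succ m ih =>
      intro i
      have := hcyc (i + m * n)
      rw [show i + ((m:ℤ) + 1) * n = i + m * n + n by ring, this, ih]; push_cast; ring
    | pred m ih =>
      intro i
      have := hcyc (i + (-(m:ℤ) - 1) * n)
      rw [show i + (-(m:ℤ) - 1) * n + n = i + (-m) * n by ring, ih] at this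
      push_cast at *; linarith
  intro i
  have hn0 : (0:ℤ) < n := by omega
  -- i = r + 1 + q n
  have h1 := Int.emod_add_mul_ediv (i - 1) n
  have h2 := Int.emod_nonneg (i - 1) hn0.ne'
  have h3 := Int.emod_lt_of_pos (i - 1) hn0
  set r := (i - 1) % n
  set q := (i - 1) / n
  have hi : i = (r + 1) + q * n := by linarith
  have hi2 : i + 1 = (r + 1 + 1) + q * n := by linarith
  rw [hi2, hc]
  conv_lhs => rw [hi, hc]
  have : s (r + 1) < s (r + 1 + 1) := by
    by_cases hr : r + 1 < n
    · exact hmono _ (by omega) hr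
    · have hr' : r + 1 = n := by omega
      rw [hr', add_comm (n:ℤ) 1, hcyc]; linarith
  linarith

lemma param_ear {x : ℝ → ℝ × ℝ} {lam : ℝ} (hlam : 0 < lam)
    (hx : ContDiff ℝ (⊤ : ℕ∞) x)
    (haff : ∀ t : ℝ, om (deriv x t) (iteratedDeriv 2 x t) = 1)
    (hper : ∀ t : ℝ, x (t + lam) = x t)
    (hinj : Set.InjOn x (Set.Ico 0 lam))
    {C : Set (ℝ × ℝ)} (hcomp : IsCompact C) (hconv : StrictConvex ℝ C)
    (hbd : x '' Set.Icc 0 lam = frontier C) {V : Set (ℝ × ℝ)} (hV : V.Finite)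
    {u t w : ℝ} (hut : u < t) (htw : t < w) (hwu : w < u + lam)
    (huV : x u ∈ V) (hwV : x w ∈ V) (hVp : ∀ v ∈ V, ∃ τ, v = x τ ∧ w ≤ τ ∧ τ ≤ u + lam) :
    (volume (convexHull ℝ (insert (x t) V))).toReal = (volume (convexHull ℝ V)).toReal +
      om (x t - x u) (x w - x u) *
        (volume (convexHull ℝ ({(0,0), (1,0), (0,1)} : Set (ℝ × ℝ)))).toReal := by
  have hfr := mem_fr hlam hper hbd
  have hfC : ∀ t, x t ∈ C := fun t => hcomp.isClosed.frontier_subset (hfr t)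
  have hD := orient hlam hx haff hper hinj hcomp hconv hbd hut htw hwu
  have hsw : om (x w - x u) (x t - x u) = - om (x t - x u) (x w - x u) := by
    simp only [om]; ring
  have := ear hconv hV (a := x u) (b := x w) (p := x t)
    (fun v hv => by obtain ⟨τ, rfl, -⟩ := hVp v hv; exact hfC τ) (hfr u) (hfr w) huV hwV
    (inj_per hlam hper hinj (by linarith) hwu) (hfC t) (by
      intro v hv
      obtain ⟨τ, rfl, h1, h2⟩ := hVp v hv
      rcases eq_or_lt_of_le h1 with rfl | h1
      · simp [om, mul_comm]
      rcases eq_or_lt_of_le h2 with rfl | h2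
      · rw [hper]; simp [om]
      exact (orient hlam hx haff hper hinj hcomp hconv hbd (by linarith) h1 h2).le)
    (by rw [hsw]; linarith)
  rw [this, hsw, abs_neg, abs_of_pos hD]

/-- The area of the convex hull. -/
noncomputable def hullArea (V : Set (ℝ × ℝ)) : ℝ := (volume (convexHull ℝ V)).toReal

lemma best_le {C : Set (ℝ × ℝ)} (hcomp : IsCompact C) (hconv : StrictConvex ℝ C)
    {n : ℕ} {A : ℝ} (hA : A = sSup { A : ℝ | ∃ S : Finset (ℝ × ℝ), ↑S ⊆ frontier C ∧ S.card ≤ n ∧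
        A = (volume (convexHull ℝ (S : Set (ℝ × ℝ)))).toReal })
    {V : Set (ℝ × ℝ)} (hV : V.Finite) (hVf : V ⊆ frontier C) (hVn : V.ncard ≤ n) :
    hullArea V ≤ A := by
  rw [hA]
  apply le_csSup
  · refine ⟨(volume C).toReal, ?_⟩
    rintro B ⟨S, hS, -, rfl⟩
    apply ENNReal.toReal_mono hcomp.measure_lt_top.ne
    apply measure_mono
    exact convexHull_min (hS.trans hcomp.isClosed.frontier_subset) hconv.convex
  · refine ⟨hV.toFinset, by simpa using hVf, ?_, by simp [hullArea]⟩
    rwa [← Set.ncard_eq_toFinset_card V hV]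

lemma poly_opt {x : ℝ → ℝ × ℝ} {lam : ℝ} (hlam : 0 < lam)
    (hx : ContDiff ℝ (⊤ : ℕ∞) x)
    (haff : ∀ t : ℝ, om (deriv x t) (iteratedDeriv 2 x t) = 1)
    (hper : ∀ t : ℝ, x (t + lam) = x t)
    (hinj : Set.InjOn x (Set.Ico 0 lam))
    {C : Set (ℝ × ℝ)} (hcomp : IsCompact C) (hconv : StrictConvex ℝ C)
    (hbd : x '' Set.Icc 0 lam = frontier C)
    {n : ℕ} (hn : 3 ≤ n) {s : ℤ → ℝ} (hs : StrictMono s)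
    (hcyc : ∀ i : ℤ, s (i + (n : ℤ)) = s i + lam)
    (hbest : ∀ V : Set (ℝ × ℝ), V.Finite → V ⊆ frontier C → V.ncard ≤ n →
      hullArea V ≤ hullArea (Set.range fun i => x (s i))) :
    (∀ i, om (deriv x (s i)) (x (s (i+1)) - x (s (i-1))) = 0) ∧
    (∀ (i j : ℤ) (t : ℝ), i < j → j < i + n - 1 → s (i-1) < t → t < s i →
      om (x t - x (s (i-1))) (x (s i) - x (s (i-1))) ≤
        om (x (s j) - x (s (j-1))) (x (s (j+1)) - x (s (j-1)))) := by
  have hfr := mem_fr hlam hper hbd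
  set y : ℤ → ℝ × ℝ := fun i => x (s i) with hy
  have hyp : Function.Periodic y (n : ℤ) := by
    intro i; simp only [hy]; rw [hcyc, hper]
  have hn0 : (0:ℤ) < n := by omega
  have hrange : ∀ m : ℤ, y '' Set.Ico m (m + n) = Set.range y := by
    intro m
    ext v
    constructor
    · rintro ⟨i, -, rfl⟩; exact ⟨i, rfl⟩
    · rintro ⟨i, rfl⟩
      obtain ⟨j, hj, h⟩ := Function.Periodic.exists_mem_Ico hyp hn0 i m
      exact ⟨j, hj, h.symm⟩
  have hIns : ∀ j : ℤ, Set.range y = insert (y j) (y '' Set.Ioo j (j + n)) := by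
    intro j
    rw [← hrange j, ← Set.image_insert_eq, Set.Ioo_insert_left (by omega)]
  have hfin : ∀ j : ℤ, (y '' Set.Ioo j (j + n)).Finite := fun j => (Set.finite_Ioo _ _).image _
  have hcard : ∀ j : ℤ, (y '' Set.Ioo j (j + n)).ncard ≤ n - 1 := by
    intro j
    refine (Set.ncard_image_le (Set.finite_Ioo _ _)).trans ?_
    rw [← Finset.coe_Ioo, Set.ncard_coe_finset, Int.card_Ioo]
    omega
  have hcard2 : ∀ (j : ℤ) (t : ℝ), (insert (x t) (y '' Set.Ioo j (j + n))).ncard ≤ n := by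
    intro j t
    have := Set.ncard_insert_le (x t) (y '' Set.Ioo j (j + n))
    have := hcard j
    omega
  have hfr2 : ∀ (j : ℤ) (t : ℝ), insert (x t) (y '' Set.Ioo j (j + n)) ⊆ frontier C := by
    rintro j t v (rfl | ⟨i, -, rfl⟩) <;> exact hfr _
  have hbest2 : ∀ (j : ℤ) (t : ℝ), hullArea (insert (x t) (y '' Set.Ioo j (j + n))) ≤
      hullArea (Set.range y) := fun j t =>
    hbest _ ((hfin j).insert _) (hfr2 j t) (hcard2 j t)
  set c := (volume (convexHull ℝ ({(0,0), (1,0), (0,1)} : Set (ℝ × ℝ)))).toReal with hc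
  have hcpos : 0 < c := volume_std_pos
  have hcyc' : ∀ j : ℤ, s (j - 1 + n) = s (j - 1) + lam := fun j => hcyc _
  -- ear at j
  have hear : ∀ (j : ℤ) (t : ℝ), s (j-1) < t → t < s (j+1) →
      hullArea (insert (x t) (y '' Set.Ioo j (j + n))) = hullArea (y '' Set.Ioo j (j + n)) +
        om (x t - x (s (j-1))) (x (s (j+1)) - x (s (j-1))) * c := by
    intro j t h1 h2
    refine param_ear hlam hx haff hper hinj hcomp hconv hbd (hfin j) h1 h2 ?_ ?_ ?_ ?_
    · rw [← hcyc']; exact hs (by omega)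
    · refine ⟨j - 1 + n, ⟨by omega, by omega⟩, ?_⟩
      simp only [hy]; rw [hcyc', hper]
    · exact ⟨j + 1, ⟨by omega, by omega⟩, rfl⟩
    · rintro v ⟨i, ⟨hi1, hi2⟩, rfl⟩
      refine ⟨s i, rfl, hs.monotone (by omega), ?_⟩
      rw [← hcyc']; exact hs.monotone (by omega)
  refine ⟨?_, ?_⟩
  · intro i
    have hmax : ∀ t ∈ Set.Ioo (s (i-1)) (s (i+1)),
        om (x t - x (s (i-1))) (x (s (i+1)) - x (s (i-1))) ≤
        om (x (s i) - x (s (i-1))) (x (s (i+1)) - x (s (i-1))) := by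
      intro t ht
      have h1 := hear i t ht.1 ht.2
      have h2 := hear i (s i) (hs (by omega)) (hs (by omega))
      have h3 := hbest2 i t
      rw [hIns i] at h3
      have : om (x t - x (s (i-1))) (x (s (i+1)) - x (s (i-1))) * c ≤
        om (x (s i) - x (s (i-1))) (x (s (i+1)) - x (s (i-1))) * c := by
        simp only [hy] at *; linarith
      exact le_of_mul_le_mul_right this hcpos
    have hloc : IsLocalMax (fun t => om (x t - x (s (i-1))) (x (s (i+1)) - x (s (i-1)))) (s i) := by
      filter_upwards [Ioo_mem_nhds (hs (show i - 1 < i by omega)) (hs (show i < i + 1 by omega))]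
        with t ht using hmax t ht
    have hxd : Differentiable ℝ x := hx.differentiable (by simp)
    have hd := om_deriv ((hxd (s i)).hasDerivAt.sub_const (x (s (i-1))))
        (hasDerivAt_const (s i) (x (s (i+1)) - x (s (i-1))))
    have := hloc.hasDerivAt_eq_zero hd
    simpa [om] using this
  · intro i j t hij hji h1 h2
    have e1 := hear j (s j) (hs (by omega)) (hs (by omega))
    have h3 := hbest2 j t
    have hset : y '' Set.Ioo j (j + n) = y '' (Set.Ico i (i + n) \ {j}) := by
      ext v
      constructor
      · rintro ⟨m, ⟨hm1, hm2⟩, rfl⟩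
        by_cases hm : m < i + n
        · exact ⟨m, ⟨⟨by omega, hm⟩, by simp; omega⟩, rfl⟩
        · refine ⟨m - n, ⟨⟨by omega, by omega⟩, by simp; omega⟩, hyp.sub_eq m⟩
      · rintro ⟨m, ⟨⟨hm1, hm2⟩, hm3⟩, rfl⟩
        have hm3' : m ≠ j := by simpa using hm3
        by_cases hm : j < m
        · exact ⟨m, ⟨hm, by omega⟩, rfl⟩
        · exact ⟨m + n, ⟨by omega, by omega⟩, hyp m⟩
    have e2 : hullArea (insert (x t) (y '' Set.Ioo j (j + n))) = hullArea (y '' Set.Ioo j (j + n)) +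
        om (x t - x (s (i-1))) (x (s i) - x (s (i-1))) * c := by
      refine param_ear hlam hx haff hper hinj hcomp hconv hbd (hfin j) h1 h2 ?_ ?_ ?_ ?_
      · rw [← hcyc']; exact hs (by omega)
      · rw [hset]
        refine ⟨i - 1 + n, ⟨⟨by omega, by omega⟩, by simp; omega⟩, ?_⟩
        simp only [hy]; rw [hcyc', hper]
      · rw [hset]; exact ⟨i, ⟨⟨by omega, by omega⟩, by simp; omega⟩, rfl⟩
      · rw [hset]
        rintro v ⟨m, ⟨⟨hi1, hi2⟩, -⟩, rfl⟩
        refine ⟨s m, rfl, hs.monotone (by omega), ?_⟩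
        rw [← hcyc']; exact hs.monotone (by omega)
    rw [hIns j] at h3
    refine le_of_mul_le_mul_right ?_ hcpos
    simp only [hy] at *; linarith

lemma x_lip {x : ℝ → ℝ × ℝ} {lam : ℝ} (hlam : 0 < lam)
    (hx : ContDiff ℝ (⊤ : ℕ∞) x) (hper : ∀ t : ℝ, x (t + lam) = x t) :
    ∃ L > 0, ∀ u v, ‖x u - x v‖ ≤ L * |u - v| := by
  obtain ⟨L, hL, hb⟩ := per_bounded hlam
    (hx.continuous_iteratedDeriv 1 (by exact_mod_cast le_top)) (iter_periodic hper 1)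
  refine ⟨L, hL, fun u v => ?_⟩
  have := Convex.norm_image_sub_le_of_norm_hasDerivWithin_le (𝕜 := ℝ) (f := x)
    (f' := iteratedDeriv 1 x) (s := Set.univ) (x := v) (y := u) (C := L)
    (fun y _ => by
      have := iter_hasDeriv hx 0 y
      simp only [iteratedDeriv_zero, zero_add] at this
      exact this.hasDerivWithinAt) (fun y _ => hb y) convex_univ trivial trivial
  simpa using this

lemma gap_upper {x : ℝ → ℝ × ℝ} {lam : ℝ} (hlam : 0 < lam)
    (hx : ContDiff ℝ (⊤ : ℕ∞) x)
    (haff : ∀ t : ℝ, om (deriv x t) (iteratedDeriv 2 x t) = 1)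
    (hper : ∀ t : ℝ, x (t + lam) = x t)
    (hinj : Set.InjOn x (Set.Ico 0 lam))
    {C : Set (ℝ × ℝ)} (hcomp : IsCompact C) (hconv : StrictConvex ℝ C)
    (hbd : x '' Set.Icc 0 lam = frontier C) :
    ∃ δ > 0, ∀ n : ℕ, 3 ≤ n → ∀ s : ℤ → ℝ, StrictMono s →
      (∀ i : ℤ, s (i + (n : ℤ)) = s i + lam) →
      (∀ V : Set (ℝ × ℝ), V.Finite → V ⊆ frontier C → V.ncard ≤ n →
        hullArea V ≤ hullArea (Set.range fun i => x (s i))) →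
      ∀ i, s i - s (i - 1) ≤ lam - δ := by
  have hfr := mem_fr hlam hper hbd
  obtain ⟨L, hL, hlip⟩ := x_lip hlam hx hper
  set A := hullArea {x 0, x (2 * lam / 3), x (lam / 3)} with hA
  have hApos : 0 < A := by
    have h1 := orient hlam hx haff hper hinj hcomp hconv hbd (u := 0) (v := lam / 3)
      (w := 2 * lam / 3) (by linarith) (by linarith) (by linarith)
    have h2 := volume_tri (x 0) (x (2 * lam / 3)) (x (lam / 3))
    rw [hA, hullArea, h2]
    have : om (x (2 * lam / 3) - x 0) (x (lam / 3) - x 0) =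
      - om (x (lam / 3) - x 0) (x (2 * lam / 3) - x 0) := by simp only [om]; ring
    rw [this, abs_neg, abs_of_pos h1]
    exact mul_pos h1 volume_std_pos
  refine ⟨Real.sqrt A / (2 * L), by positivity, ?_⟩
  intro n hn s hs hcyc hbest i
  set g := s (i - 1) + lam - s i with hg
  have hg0 : 0 < g := by
    have : s i < s (i - 1 + n) := hs (by omega)
    rw [hcyc] at this; simp only [hg]; linarith
  have hfin3 : Set.Finite ({x 0, x (2 * lam / 3), x (lam / 3)} : Set (ℝ × ℝ)) := by simp
  have h1 := hbest {x 0, x (2 * lam / 3), x (lam / 3)} hfin3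
    (by rintro v (rfl | rfl | rfl) <;> exact hfr _) (by
      have e1 := Set.ncard_insert_le (x 0) {x (2 * lam / 3), x (lam / 3)}
      have e2 := Set.ncard_insert_le (x (2 * lam / 3)) {x (lam / 3)}
      rw [Set.ncard_singleton] at e2
      omega)
  have h2 : hullArea (Set.range fun i => x (s i)) ≤ (2 * (L * g)) ^ 2 := by
    have hsub : convexHull ℝ (Set.range fun i => x (s i)) ⊆ Metric.closedBall (x (s i)) (L * g) := by
      refine convexHull_min ?_ (convex_closedBall _ _)
      rintro v ⟨m, rfl⟩
      have hyp : Function.Periodic (fun i => x (s i)) (n : ℤ) := by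
        intro i; simp only []; rw [hcyc, hper]
      obtain ⟨j, hj, h⟩ := Function.Periodic.exists_mem_Ico hyp (show (0:ℤ) < n by omega) m i
      have h' : x (s m) = x (s j) := h
      show x (s m) ∈ _
      rw [h', mem_closedBall_iff_norm]
      refine (hlip _ _).trans ?_
      have a1 : s i ≤ s j := hs.monotone hj.1
      have a2 : s j ≤ s (i - 1 + n) := hs.monotone (by have := hj.2; omega)
      rw [hcyc] at a2
      rw [abs_of_nonneg (by linarith)]
      gcongr
      simp only [hg]; linarith
    have hvol : volume (Metric.closedBall (x (s i)) (L * g)) =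
        ENNReal.ofReal (2 * (L * g)) * ENNReal.ofReal (2 * (L * g)) := by
      rw [show x (s i) = ((x (s i)).1, (x (s i)).2) from rfl, ← closedBall_prod_same,
        Measure.volume_eq_prod, Measure.prod_prod, Real.volume_closedBall, Real.volume_closedBall]
    have hle := measure_mono (μ := volume) hsub
    rw [hvol] at hle
    have := ENNReal.toReal_mono (by finiteness) hle
    rw [ENNReal.toReal_mul, ENNReal.toReal_ofReal (by positivity)] at this
    rw [hullArea, sq]; exact this
  have h3 : Real.sqrt A ≤ 2 * (L * g) := by
    rw [Real.sqrt_le_left (by positivity)]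
    exact h1.trans h2
  have h4 : Real.sqrt A / (2 * L) ≤ g := by
    rw [div_le_iff₀ (by positivity)]; linarith
  simp only [hg] at h4; linarith

lemma gap_small {x : ℝ → ℝ × ℝ} {lam : ℝ} (hlam : 0 < lam)
    (hx : ContDiff ℝ (⊤ : ℕ∞) x)
    (haff : ∀ t : ℝ, om (deriv x t) (iteratedDeriv 2 x t) = 1)
    (hper : ∀ t : ℝ, x (t + lam) = x t)
    (hinj : Set.InjOn x (Set.Ico 0 lam))
    {C : Set (ℝ × ℝ)} (hcomp : IsCompact C) (hconv : StrictConvex ℝ C)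
    (hbd : x '' Set.Icc 0 lam = frontier C) (δ : ℝ) (hδ : 0 < δ) :
    ∃ N : ℕ, ∀ n : ℕ, 3 ≤ n → N ≤ n → ∀ s : ℤ → ℝ, StrictMono s →
      (∀ i : ℤ, s (i + (n : ℤ)) = s i + lam) →
      (∀ V : Set (ℝ × ℝ), V.Finite → V ⊆ frontier C → V.ncard ≤ n →
        hullArea V ≤ hullArea (Set.range fun i => x (s i))) →
      ∀ i, s i - s (i - 1) < δ := by
  obtain ⟨δ₀, hδ₀, hup⟩ := gap_upper hlam hx haff hper hinj hcomp hconv hbd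
  by_cases hcase : δ ≤ lam - δ₀
  swap
  · exact ⟨0, fun n hn _ s hs hcyc hbest i =>
      (hup n hn s hs hcyc hbest i).trans_lt (by linarith)⟩
  obtain ⟨L, hL, hlip⟩ := x_lip hlam hx hper
  have hxc : Continuous x := hx.continuous
  let G : ℝ × ℝ → ℝ := fun z => om (x (z.1 + z.2 / 2) - x z.1) (x (z.1 + z.2) - x z.1)
  have hGc : Continuous G := by
    simp only [G, om]; fun_prop
  have hKc : IsCompact (Set.Icc 0 lam ×ˢ Set.Icc δ (lam - δ₀)) := isCompact_Icc.prod isCompact_Icc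
  obtain ⟨z₀, hz₀, hmin⟩ := hKc.exists_isMinOn
    (⟨(0, δ), ⟨le_refl _, hlam.le⟩, le_refl _, hcase⟩) hGc.continuousOn
  set m := G z₀ with hm
  have hmpos : 0 < m := by
    obtain ⟨-, h1, h2⟩ := hz₀
    exact orient hlam hx haff hper hinj hcomp hconv hbd (by linarith) (by linarith) (by linarith)
  have hGm : ∀ u h, δ ≤ h → h ≤ lam - δ₀ → m ≤ G (u, h) := by
    intro u h h1 h2
    have hGp : Function.Periodic (fun u => G (u, h)) lam := by
      intro u
      simp only [G]
      rw [show u + lam + h / 2 = u + h / 2 + lam by ring, show u + lam + h = u + h + lam by ring,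
        hper, hper, hper]
    obtain ⟨u', hu', he⟩ := hGp.exists_mem_Ico₀ hlam u
    have he' : G (u, h) = G (u', h) := he
    rw [he']
    exact hmin (show (u', h) ∈ _ from ⟨⟨hu'.1, hu'.2.le⟩, h1, h2⟩)
  set η := m / (2 * L ^ 2 * lam) with hη
  have hηpos : 0 < η := by positivity
  obtain ⟨N, hN⟩ := exists_nat_gt (lam / η + 2)
  refine ⟨N, fun n hn hNn s hs hcyc hbest i => ?_⟩
  by_contra! hge
  obtain ⟨-, hswap⟩ := poly_opt hlam hx haff hper hinj hcomp hconv hbd hn hs hcyc hbest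
  have hstep : ∀ j : ℤ, i < j → j < i + n - 1 → η ≤ s j - s (j - 1) := by
    intro j h1 h2
    set h := s i - s (i - 1) with hh
    have a1 := hGm (s (i-1)) h hge (hup n hn s hs hcyc hbest i)
    have a2 := hswap i j (s (i-1) + h / 2) h1 h2 (by linarith) (by simp only [hh]; linarith)
    simp only [G] at a1
    rw [show s (i-1) + h = s i by simp only [hh]; ring] at a1
    have a3 := a1.trans a2
    have a4 := (le_abs_self _).trans (om_bound (x (s j) - x (s (j-1))) (x (s (j+1)) - x (s (j-1))))
    have b1 : s (j - 1) < s j := hs (by omega)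
    have b2 : s (j - 1) < s (j + 1) := hs (by omega)
    have b3 : s (j + 1) < s (j - 1 + n) := hs (by omega)
    rw [hcyc] at b3
    have c1 := hlip (s j) (s (j-1))
    have c2 := hlip (s (j+1)) (s (j-1))
    rw [abs_of_pos (by linarith)] at c1 c2
    have a5 : m ≤ 2 * (L * (s j - s (j-1))) * (L * lam) := by
      refine (a3.trans a4).trans ?_
      gcongr
      refine c2.trans ?_
      gcongr
      linarith
    rw [hη, div_le_iff₀ (by positivity)]
    linarith
  have hind : ∀ p : ℕ, p ≤ n - 2 → p * η ≤ s (i + p) - s i := by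
    intro p
    induction p with
    | zero => intro _; simp
    | succ p ih =>
      intro hp
      have h1 := ih (by omega)
      have h2 := hstep (i + (p + 1 : ℕ)) (by push_cast; omega) (by push_cast; omega)
      rw [show i + ((p + 1 : ℕ) : ℤ) - 1 = i + p by push_cast; ring] at h2
      push_cast at *
      linarith
  have h1 := hind (n - 2) le_rfl
  have h2 : s (i + (n - 2 : ℕ)) < s (i + n) := hs (by omega)
  rw [hcyc] at h2
  have h3 : ((n - 2 : ℕ) : ℝ) = n - 2 := by push_cast [Nat.cast_sub (show 2 ≤ n by omega)]; ring
  rw [h3] at h1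
  have h4 : (N : ℝ) ≤ n := by exact_mod_cast hNn
  have h5 : lam / η < n - 2 := by linarith
  rw [div_lt_iff₀ hηpos] at h5
  linarith

lemma alg1 {a b M K κ κ' : ℝ} (ha : 0 < a) (hb : 0 < b) (haM : a ≤ M) (hbM : b ≤ M) (hM1 : M ≤ 1)
    (hK : 0 < K) (hKM : K * M ^ 2 ≤ 1) (hκ : |κ| ≤ K) (hκ' : |κ'| ≤ K)
    (hE : |(a^2/2 - κ*a^4/24 - κ'*a^5/60) - (b^2/2 - κ*b^4/24 + κ'*b^5/60)| ≤ K * (a^6+b^6)) :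
    |a - b| ≤ 8 * K * M ^ 3 * (a + b) := by
  have hM : 0 < M := by linarith
  have h1 : |κ * (a^2+b^2) / 12| ≤ 1/2 := by
    rw [abs_div, abs_mul, abs_of_pos (show (0:ℝ) < a^2+b^2 by positivity)]
    have : |κ| * (a^2+b^2) ≤ K * (M^2+M^2) := by gcongr
    rw [abs_of_pos (by norm_num : (0:ℝ) < 12)]
    linarith
  have h2 : 1/2 ≤ 1 - κ * (a^2+b^2)/12 := by have := (abs_le.mp h1).2; linarith
  have h3 : |(a-b)*((a+b)/2)*(1 - κ * (a^2+b^2)/12)| ≤ 2 * K * (a^5+b^5) := by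
    have e : (a-b)*((a+b)/2)*(1 - κ * (a^2+b^2)/12) =
      ((a^2/2 - κ*a^4/24 - κ'*a^5/60) - (b^2/2 - κ*b^4/24 + κ'*b^5/60)) + κ'*((a^5+b^5)/60) := by ring
    rw [e]
    refine (abs_add_le _ _).trans ?_
    have f1 : |κ'*((a^5+b^5)/60)| ≤ K * ((a^5+b^5)/60) := by
      rw [abs_mul, abs_of_pos (show 0 < (a^5+b^5)/60 by positivity)]; gcongr
    have f2 : a^6 ≤ a^5 := pow_le_pow_of_le_one ha.le (by linarith) (by norm_num)
    have f3 : b^6 ≤ b^5 := pow_le_pow_of_le_one hb.le (by linarith) (by norm_num)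
    have f4 : K * (a^6+b^6) ≤ K * (a^5+b^5) := by gcongr
    have f5 : 0 < K * (a^5+b^5) := by positivity
    linarith
  have h4 : |a-b| * ((a+b)/4) ≤ |(a-b)*((a+b)/2)*(1 - κ * (a^2+b^2)/12)| := by
    rw [abs_mul, abs_mul, abs_of_pos (show 0 < (a+b)/2 by positivity),
      abs_of_pos (show 0 < 1 - κ * (a^2+b^2)/12 by linarith)]
    calc |a-b| * ((a+b)/4) = |a-b| * ((a+b)/2) * (1/2) := by ring
      _ ≤ _ := by gcongr
  have h5 : a^5+b^5 ≤ M^3 * (a+b)^2 := by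
    calc a^5+b^5 = a^3*a^2 + b^3*b^2 := by ring
      _ ≤ M^3*a^2 + M^3*b^2 := by gcongr
      _ ≤ M^3*(a+b)^2 := by
        have : 0 < M^3 * (a*b) := by positivity
        nlinarith
  have h6 : |a-b| * ((a+b)/4) ≤ (8 * K * M^3 * (a+b)) * ((a+b)/4) := by
    calc _ ≤ 2 * K * (a^5+b^5) := h4.trans h3
      _ ≤ 2 * K * (M^3 * (a+b)^2) := by gcongr
      _ = _ := by ring
  exact le_of_mul_le_mul_right h6 (by positivity)

lemma alg2 {a b H K K2 κ κ' : ℝ} (ha : 0 < a) (hb : 0 < b) (haH : a ≤ 2*H) (hbH : b ≤ 2*H)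
    (hH1 : H ≤ 1) (hK : 0 < K) (hK2 : 0 < K2) (hκ : |κ| ≤ K) (hκ' : |κ'| ≤ K)
    (hb2 : |b - H| ≤ K2 * H^3) (hab : |a - b| ≤ 256 * K * H^4)
    (hE : |(a^2/2 - κ*a^4/24 - κ'*a^5/60) - (b^2/2 - κ*b^4/24 + κ'*b^5/60)| ≤ K * (a^6+b^6)) :
    |a - b - κ' * H^4/30| ≤ (64*K + 256*K^2 + K*(4096*K+15*K2)) * H^5 := by
  have hH : 0 < H := by linarith
  set Q := a^3*(a-b) + a*b^2*(a-b) + b^4 with hQ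
  have p65 : H^6 ≤ H^5 := pow_le_pow_of_le_one hH.le hH1 (by norm_num)
  have p75 : H^7 ≤ H^5 := pow_le_pow_of_le_one hH.le hH1 (by norm_num)
  have h1 : |(a-b) - κ*(a-b)*(a^2+b^2)/12 - κ'*Q/30| ≤ 64*K*H^5 := by
    have e : ((a-b) - κ*(a-b)*(a^2+b^2)/12 - κ'*Q/30) * ((a+b)/2) =
      (a^2/2 - κ*a^4/24 - κ'*a^5/60) - (b^2/2 - κ*b^4/24 + κ'*b^5/60) := by rw [hQ]; ring
    have e2 : a^6+b^6 ≤ (2*H)^5*(a+b) := by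
      calc a^6+b^6 = a^5*a+b^5*b := by ring
        _ ≤ (2*H)^5*a+(2*H)^5*b := by gcongr
        _ = _ := by ring
    have e3 : |(a-b) - κ*(a-b)*(a^2+b^2)/12 - κ'*Q/30| * ((a+b)/2) ≤ (64*K*H^5)*((a+b)/2) := by
      calc _ = |((a-b) - κ*(a-b)*(a^2+b^2)/12 - κ'*Q/30) * ((a+b)/2)| := by
            rw [abs_mul, abs_of_pos (show 0 < (a+b)/2 by positivity)]
        _ ≤ K * (a^6+b^6) := by rw [e]; exact hE
        _ ≤ K * ((2*H)^5*(a+b)) := by gcongr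
        _ = _ := by ring
    exact le_of_mul_le_mul_right e3 (by positivity)
  have h2 : |κ*(a-b)*(a^2+b^2)/12| ≤ 256*K^2*H^5 := by
    rw [abs_div, abs_mul, abs_mul, abs_of_pos (show (0:ℝ) < a^2+b^2 by positivity),
      abs_of_pos (by norm_num : (0:ℝ) < 12)]
    have : |κ| * |a-b| * (a^2+b^2) ≤ K * (256*K*H^4) * ((2*H)^2+(2*H)^2) := by gcongr
    have e : K * (256*K*H^4) * ((2*H)^2+(2*H)^2) = 2048*K^2*H^6 := by ring
    have e2 : K^2*H^6 ≤ K^2*H^5 := by gcongr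
    have : 0 < K^2*H^6 := by positivity
    linarith
  have h3 : |Q - H^4| ≤ (4096*K+15*K2)*H^5 := by
    have e : Q - H^4 = a^3*(a-b) + a*b^2*(a-b) + (b-H)*((b+H)*(b^2+H^2)) := by rw [hQ]; ring
    rw [e]
    have f1 : |a^3*(a-b)| ≤ (2*H)^3*(256*K*H^4) := by
      rw [abs_mul, abs_of_pos (show 0 < a^3 by positivity)]; gcongr
    have f2 : |a*b^2*(a-b)| ≤ (2*H)*(2*H)^2*(256*K*H^4) := by
      rw [abs_mul, abs_of_pos (show 0 < a*b^2 by positivity)]; gcongr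
    have f3 : |(b-H)*((b+H)*(b^2+H^2))| ≤ (K2*H^3)*((2*H+H)*((2*H)^2+H^2)) := by
      rw [abs_mul, abs_of_pos (show 0 < (b+H)*(b^2+H^2) by positivity)]; gcongr
    have g := abs_add_three (a^3*(a-b)) (a*b^2*(a-b)) ((b-H)*((b+H)*(b^2+H^2)))
    have f4 : K*H^7 ≤ K*H^5 := by gcongr
    have f5 : K2*H^6 ≤ K2*H^5 := by gcongr
    linarith
  have h4 : |κ'*(Q-H^4)/30| ≤ K*(4096*K+15*K2)*H^5 := by
    rw [abs_div, abs_mul, abs_of_pos (by norm_num : (0:ℝ) < 30)]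
    have : |κ'| * |Q-H^4| ≤ K*((4096*K+15*K2)*H^5) := by gcongr
    have : 0 < K*((4096*K+15*K2)*H^5) := by positivity
    linarith
  have e : a - b - κ' * H^4/30 = ((a-b) - κ*(a-b)*(a^2+b^2)/12 - κ'*Q/30) +
    κ*(a-b)*(a^2+b^2)/12 + κ'*(Q-H^4)/30 := by ring
  rw [e]
  refine (abs_add_three _ _ _).trans ?_
  linarith

lemma avg {f : ℤ → ℝ} {e : ℝ} (hf : ∀ i, |f (i+1) - f i| ≤ e) (i : ℤ) (p : ℕ) :
    |f (i + p) - f i| ≤ e * p ∧ |∑ l ∈ Finset.range p, f (i + 1 + l) - p * f i| ≤ e * p ^ 2 := by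
  have he : 0 ≤ e := (abs_nonneg _).trans (hf 0)
  induction p with
  | zero => simp
  | succ p ih =>
    obtain ⟨h1, h2⟩ := ih
    have h3 : |f (i + (p+1:ℕ)) - f i| ≤ e * (p+1:ℕ) := by
      have := hf (i + p)
      rw [show i + ((p+1:ℕ):ℤ) = i + p + 1 by push_cast; ring]
      rw [show f (i+p+1) - f i = (f (i+p+1) - f (i+p)) + (f (i+p) - f i) by ring]
      refine (abs_add_le _ _).trans ?_
      push_cast; linarith
    refine ⟨h3, ?_⟩
    rw [Finset.sum_range_succ]
    have e1 : i + 1 + (p:ℤ) = i + (p+1:ℕ) := by push_cast; ring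
    rw [e1]
    have e2 : ∑ l ∈ Finset.range p, f (i + 1 + l) + f (i + (p+1:ℕ)) - (p+1:ℕ) * f i =
      (∑ l ∈ Finset.range p, f (i + 1 + l) - p * f i) + (f (i + (p+1:ℕ)) - f i) := by
      push_cast; ring
    rw [e2]
    refine (abs_add_le _ _).trans ?_
    push_cast at *
    nlinarith [mul_nonneg he (Nat.cast_nonneg (α := ℝ) p)]

lemma sum_tele (s : ℤ → ℝ) (i : ℤ) (p : ℕ) :
    ∑ l ∈ Finset.range p, (s (i + 1 + l) - s (i + 1 + l - 1)) = s (i + p) - s i := by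
  induction p with
  | zero => simp
  | succ p ih =>
    rw [Finset.sum_range_succ, ih]
    rw [show i + 1 + (p:ℤ) - 1 = i + p by ring, show i + 1 + (p:ℤ) = i + (p+1:ℕ) by push_cast; ring]
    ring

lemma gap_core {lam K : ℝ} (hlam : 0 < lam) (hK : 0 < K) {n : ℕ} (hn : 1 ≤ n) {s : ℤ → ℝ}
    (hs : StrictMono s) (hcyc : ∀ i : ℤ, s (i + (n : ℤ)) = s i + lam) {l : ℤ → ℝ}
    (hl : ∀ i, l i = s i - s (i - 1)) {δ : ℝ} (hδ1 : δ ≤ 1) (hδ2 : K * δ ^ 2 ≤ 1)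
    (hδ3 : 32 * K * lam * δ ^ 2 ≤ 1) (hgap : ∀ i, l i < δ) {κ κ' : ℤ → ℝ}
    (hκ : ∀ i, |κ i| ≤ K) (hκ' : ∀ i, |κ' i| ≤ K)
    (hE : ∀ i, |((l (i+1))^2/2 - κ i*(l (i+1))^4/24 - κ' i*(l (i+1))^5/60) -
      ((l i)^2/2 - κ i*(l i)^4/24 + κ' i*(l i)^5/60)| ≤ K * ((l (i+1))^6+(l i)^6)) :
    ∀ i, l i ≤ 2 * (lam / n) := by
  have hpos : ∀ i, 0 < l i := fun i => by
    rw [hl]; have := hs (show i - 1 < i by omega); linarith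
  have hn0 : (0:ℤ) < n := by exact_mod_cast hn
  have hlp : Function.Periodic l (n:ℤ) := fun i => by
    rw [hl, hl, show i + (n:ℤ) - 1 = (i - 1) + n by ring, hcyc, hcyc]; ring
  obtain ⟨i0, -, hi0⟩ := Finset.exists_max_image (Finset.Ico (0:ℤ) n) l ⟨0, by simp; omega⟩
  have hmax : ∀ i, l i ≤ l i0 := fun i => by
    obtain ⟨j, hj, e⟩ := hlp.exists_mem_Ico hn0 i 0
    rw [e]; exact hi0 j (by simpa using hj)
  set M := l i0 with hM
  have hMp : 0 < M := hpos i0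
  have hMδ : M ≤ δ := (hgap i0).le
  have hM2 : M^2 ≤ δ^2 := by gcongr
  have step : ∀ i, |l (i+1) - l i| ≤ 8 * K * M ^ 3 * (l (i+1) + l i) := fun i =>
    alg1 (hpos _) (hpos _) (hmax _) (hmax _) (hMδ.trans hδ1) hK
      (le_trans (by gcongr) hδ2) (hκ i) (hκ' i) (hE i)
  have ind : ∀ p : ℕ, |l (i0 + p) - l i0| ≤
      8 * K * M ^ 3 * ((s (i0 + p) - s i0) + (s (i0 + p - 1) - s (i0 - 1))) := by
    intro p
    induction p with
    | zero => simp
    | succ p ih =>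
      have := step (i0 + p)
      rw [show i0 + ((p+1:ℕ):ℤ) = i0 + p + 1 by push_cast; ring]
      rw [show l (i0+p+1) - l i0 = (l (i0+p+1) - l (i0+p)) + (l (i0+p) - l i0) by ring]
      refine (abs_add_le _ _).trans ?_
      refine (add_le_add this ih).trans (le_of_eq ?_)
      rw [hl (i0+p+1), hl (i0+p)]
      rw [show i0 + (p:ℤ) + 1 - 1 = i0 + p by ring]
      ring
  have half : ∀ p : ℕ, p ≤ n → M / 2 ≤ l (i0 + p) := by
    intro p hp
    have h1 := ind p
    have h2 : s (i0 + p) ≤ s i0 + lam := by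
      rw [← hcyc]; exact hs.monotone (by omega)
    have h3 : s (i0 + p - 1) ≤ s (i0 - 1) + lam := by
      rw [← hcyc]; exact hs.monotone (by omega)
    have h4 : 8 * K * M ^ 3 * ((s (i0 + p) - s i0) + (s (i0 + p - 1) - s (i0 - 1))) ≤
      8 * K * M ^ 3 * (2 * lam) := by
      gcongr; linarith
    have h5 : 8 * K * M ^ 3 * (2 * lam) ≤ M / 2 := by
      have : K * lam * M * M^2 ≤ K * lam * M * δ^2 := by gcongr
      have : 32 * K * lam * δ^2 * M ≤ 1 * M := by gcongr
      nlinarith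
    have := (abs_le.mp (h1.trans (h4.trans h5))).1
    linarith
  have hsum : lam = ∑ j ∈ Finset.range n, l (i0 + 1 + j) := by
    simp_rw [hl]; rw [sum_tele, hcyc]; ring
  have hge : (n:ℝ) * (M/2) ≤ lam := by
    rw [hsum]
    calc (n:ℝ) * (M/2) = ∑ j ∈ Finset.range n, M/2 := by simp
      _ ≤ _ := by
        apply Finset.sum_le_sum
        intro j hj
        have := half (j+1) (by simpa using hj)
        rwa [show i0 + ((j+1:ℕ):ℤ) = i0 + 1 + j by push_cast; ring] at this
  intro i
  refine (hmax i).trans ?_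
  have hnr : (0:ℝ) < n := by exact_mod_cast hn
  rw [← mul_div_assoc, le_div_iff₀ hnr]
  linarith

lemma gap_core2 {lam K : ℝ} (hlam : 0 < lam) (hK : 0 < K) {n : ℕ} (hn : 1 ≤ n) {s : ℤ → ℝ}
    (hs : StrictMono s) (hcyc : ∀ i : ℤ, s (i + (n : ℤ)) = s i + lam) {l : ℤ → ℝ}
    (hl : ∀ i, l i = s i - s (i - 1)) {δ : ℝ} (hδ1 : δ ≤ 1) (hδ2 : K * δ ^ 2 ≤ 1)
    (hδ3 : 32 * K * lam * δ ^ 2 ≤ 1) (hgap : ∀ i, l i < δ) {κ κ' : ℤ → ℝ}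
    (hκ : ∀ i, |κ i| ≤ K) (hκ' : ∀ i, |κ' i| ≤ K)
    (hE : ∀ i, |((l (i+1))^2/2 - κ i*(l (i+1))^4/24 - κ' i*(l (i+1))^5/60) -
      ((l i)^2/2 - κ i*(l i)^4/24 + κ' i*(l i)^5/60)| ≤ K * ((l (i+1))^6+(l i)^6))
    {H : ℝ} (hH : H = lam / n) (hH1 : H ≤ 1) (hHK : 4 * K * H ^ 2 ≤ 1) (hH2 : 2 * H ≤ 1) :
    (∀ i, l i ≤ 2 * H) ∧ (∀ i, |l i - H| ≤ 256 * K * lam * H ^ 3) ∧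
    ∀ i, |l (i+1) - l i - κ' i * H^4/30| ≤
      (64*K + 256*K^2 + K*(4096*K+15*(256 * K * lam))) * H^5 := by
  have hpos : ∀ i, 0 < l i := fun i => by
    rw [hl]; have := hs (show i - 1 < i by omega); linarith
  have hnr : (0:ℝ) < n := by exact_mod_cast hn
  have hHp : 0 < H := by rw [hH]; positivity
  have hnH : n * H = lam := by rw [hH]; field_simp
  have h2H : ∀ i, l i ≤ 2 * H := by
    rw [hH]; exact gap_core hlam hK hn hs hcyc hl hδ1 hδ2 hδ3 hgap hκ hκ' hE
  have step : ∀ i, |l (i+1) - l i| ≤ 256 * K * H ^ 4 := fun i => by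
    have := alg1 (hpos (i+1)) (hpos i) (h2H _) (h2H _) hH2 hK (by linarith) (hκ i) (hκ' i) (hE i)
    refine this.trans ?_
    calc 8 * K * (2*H)^3 * (l (i+1) + l i) ≤ 8 * K * (2*H)^3 * (2*H+2*H) := by
          gcongr <;> exact h2H _
      _ = _ := by ring
  have hc : ∀ i, |l i - H| ≤ 256 * K * lam * H ^ 3 := fun i => by
    have h1 := (avg step i n).2
    have hsum : ∑ j ∈ Finset.range n, l (i + 1 + j) = lam := by
      simp_rw [hl]; rw [sum_tele, hcyc]; ring
    rw [hsum, ← hnH, ← mul_sub, abs_mul, abs_of_pos hnr, abs_sub_comm] at h1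
    have h2 : (n:ℝ) * |l i - H| ≤ n * (256 * K * lam * H^3) := by
      refine h1.trans (le_of_eq ?_)
      rw [← hnH]; ring
    exact le_of_mul_le_mul_left h2 hnr
  exact ⟨h2H, hc, fun i => alg2 (hpos _) (hpos _) (h2H _) (h2H _) hH1 hK (by positivity) (hκ i) (hκ' i)
    (hc i) (step i) (hE i)⟩

lemma asymp_core {lam K : ℝ} (hlam : 0 < lam) (hK : 0 < K) {n : ℕ} (hn : 1 ≤ n) {s : ℤ → ℝ}
    (hs : StrictMono s) (hcyc : ∀ i : ℤ, s (i + (n : ℤ)) = s i + lam) {l : ℤ → ℝ}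
    (hl : ∀ i, l i = s i - s (i - 1)) {k k1 : ℝ → ℝ} (hkper : Function.Periodic k lam)
    (hk0 : ∀ t, |k t| ≤ K) (hk1 : ∀ t, |k1 t| ≤ K) (hkd : ∀ t, HasDerivAt k (k1 t) t)
    (hk2 : ∀ s h, |k (s + h) - k s - k1 s * h| ≤ K * |h| ^ 2)
    {H K2 K3 : ℝ} (hH : H = lam / n) (hH1 : H ≤ 1) (hK2 : 0 < K2)
    (h2H : ∀ i, l i ≤ 2 * H) (hc : ∀ i, |l i - H| ≤ K2 * H ^ 3)
    (hd : ∀ i, |l (i+1) - l i - k1 (s i) * H^4/30| ≤ K3 * H^5) (i : ℤ) :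
    |l i - H + H^2 / (30 * n) * (∫ t in (0:ℝ)..lam, k t) - H^3/30 * k (s i)| ≤
      ((K3 + (4*K+K*K2)) * lam + (4*K+K*K2)) * H^4 := by
  have hpos : ∀ i, 0 < l i := fun i => by
    rw [hl]; have := hs (show i - 1 < i by omega); linarith
  have hnr : (0:ℝ) < n := by exact_mod_cast hn
  have hHp : 0 < H := by rw [hH]; positivity
  have hnH : n * H = lam := by rw [hH]; field_simp
  have H32 : H^3 ≤ H^2 := pow_le_pow_of_le_one hHp.le hH1 (by norm_num)
  have hkc : Continuous k := continuous_iff_continuousAt.2 fun t => (hkd t).continuousAt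
  -- step 5
  have hkstep : ∀ i, |k (s (i+1)) - k (s i) - k1 (s i) * H| ≤ (4*K+K*K2) * H^2 := fun i => by
    have h1 := hk2 (s i) (l (i+1))
    have e : s i + l (i+1) = s (i+1) := by rw [hl, add_sub_cancel_right]; ring
    rw [e, abs_of_pos (hpos _)] at h1
    have h2 : |k1 (s i) * (l (i+1) - H)| ≤ K * (K2 * H^3) := by
      rw [abs_mul]; gcongr
      · exact hk1 _
      · exact hc _
    rw [show k (s (i+1)) - k (s i) - k1 (s i) * H =
      (k (s (i+1)) - k (s i) - k1 (s i) * l (i+1)) + k1 (s i) * (l (i+1) - H) by ring]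
    refine (abs_add_le _ _).trans ?_
    have h3 : K * (l (i+1))^2 ≤ K * (2*H)^2 := by
      have := hpos (i+1)
      gcongr; exact h2H _
    have h4 : K * (K2 * H^3) ≤ K * (K2 * H^2) := by gcongr
    linarith
  have hmu : ∀ i, |(l (i+1) - H^3/30 * k (s (i+1))) - (l i - H^3/30 * k (s i))| ≤
      (K3 + (4*K+K*K2)) * H^5 := fun i => by
    have h1 := hd i
    have h2 := hkstep i
    rw [show (l (i+1) - H^3/30 * k (s (i+1))) - (l i - H^3/30 * k (s i)) =
      (l (i+1) - l i - k1 (s i) * H^4/30) +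
        -(H^3/30 * (k (s (i+1)) - k (s i) - k1 (s i) * H)) by ring]
    refine (abs_add_le _ _).trans ?_
    rw [abs_neg, abs_mul, abs_of_pos (show 0 < H^3/30 by positivity)]
    have h3 : H^3/30 * |k (s (i+1)) - k (s i) - k1 (s i) * H| ≤
      H^3/30 * ((4*K+K*K2) * H^2) := by gcongr
    have h4 : 0 < (4*K+K*K2)*H^5 := by positivity
    nlinarith
  -- step 6
  have hR : ∀ j, |(∫ t in s (j-1)..s j, k t) - H * k (s j)| ≤ (4*K+K*K2) * H^2 := fun j => by
    have hkl : ∀ t u, |k t - k u| ≤ K * |t - u| := fun t u => by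
      have := Convex.norm_image_sub_le_of_norm_hasDerivWithin_le (𝕜 := ℝ) (f := k)
        (f' := k1) (s := Set.univ) (x := u) (y := t) (C := K)
        (fun y _ => (hkd y).hasDerivWithinAt) (fun y _ => hk1 y) convex_univ trivial trivial
      simpa using this
    have hlt : s (j-1) ≤ s j := hs.monotone (by omega)
    have e : (∫ t in s (j-1)..s j, k t) - H * k (s j) =
        (∫ t in s (j-1)..s j, (k t - k (s j))) + (l j - H) * k (s j) := by
      rw [intervalIntegral.integral_sub (hkc.intervalIntegrable _ _) (by simp), 
        intervalIntegral.integral_const, hl j, smul_eq_mul]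
      ring
    have h1 : |∫ t in s (j-1)..s j, (k t - k (s j))| ≤ (K * (2*H)) * |s j - s (j-1)| := by
      have := intervalIntegral.norm_integral_le_of_norm_le_const (a := s (j-1)) (b := s j)
        (f := fun t => k t - k (s j)) (C := K * (2*H)) (fun t ht => by
          rw [Set.uIoc_of_le hlt] at ht
          refine (hkl t (s j)).trans ?_
          gcongr
          have := h2H j
          rw [hl] at this
          rw [abs_le]; constructor <;> linarith [ht.1, ht.2])
      simpa using this
    rw [← hl j, abs_of_pos (hpos j)] at h1
    have h2 : (K * (2*H)) * l j ≤ (K * (2*H)) * (2*H) := by gcongr; exact h2H j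
    have h3 : |(l j - H) * k (s j)| ≤ (K2 * H^3) * K := by
      rw [abs_mul]; gcongr
      · exact hc _
      · exact hk0 _
    have h4 : K * (K2 * H^3) ≤ K * (K2 * H^2) := by gcongr
    rw [e]
    refine (abs_add_le _ _).trans ?_
    linarith
  have hsumI : ∑ j ∈ Finset.range n, (∫ t in s (i + 1 + j - 1)..s (i+1+j), k t) =
      ∫ t in (0:ℝ)..lam, k t := by
    have h1 := intervalIntegral.sum_integral_adjacent_intervals (μ := volume) (f := k)
      (a := fun p : ℕ => s (i + p)) (n := n) (fun p _ => hkc.intervalIntegrable _ _)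
    have h2 := hkper.intervalIntegral_add_eq (s i) 0
    simp only [Nat.cast_zero, add_zero, hcyc] at h1
    rw [zero_add] at h2
    rw [← h2, ← h1]
    apply Finset.sum_congr rfl
    intro j _
    rw [show i + 1 + (j:ℤ) - 1 = i + j by ring,
      show i + 1 + (j:ℤ) = i + ((j+1:ℕ):ℤ) by push_cast; ring]
  have hsumR : |(∫ t in (0:ℝ)..lam, k t) - H * ∑ j ∈ Finset.range n, k (s (i+1+j))| ≤
      n * ((4*K+K*K2) * H^2) := by
    rw [← hsumI, Finset.mul_sum, ← Finset.sum_sub_distrib]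
    refine (Finset.abs_sum_le_sum_abs _ _).trans ?_
    calc _ ≤ ∑ j ∈ Finset.range n, (4*K+K*K2) * H^2 := Finset.sum_le_sum fun j _ => hR _
      _ = _ := by simp
  have hav := (avg (f := fun i => l i - H^3/30 * k (s i)) hmu i n).2
  have hsuml : ∑ j ∈ Finset.range n, l (i + 1 + j) = lam := by
    simp_rw [hl]; rw [sum_tele, hcyc]; ring
  rw [Finset.sum_sub_distrib, hsuml, ← Finset.mul_sum] at hav
  set Sk := ∑ j ∈ Finset.range n, k (s (i+1+j))
  set I := ∫ t in (0:ℝ)..lam, k t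
  have key : (n:ℝ) * (l i - H + H^2 / (30 * n) * I - H^3/30 * k (s i)) =
    -(lam - H^3/30 * Sk - n * (l i - H^3/30 * k (s i))) + H^2/30 * (I - H * Sk) := by
    rw [← hnH]; field_simp; ring
  have fin : (n:ℝ) * |l i - H + H^2 / (30 * n) * I - H^3/30 * k (s i)| ≤
      n * (((K3 + (4*K+K*K2)) * lam + (4*K+K*K2)) * H^4) := by
    rw [← abs_of_pos hnr, ← abs_mul, abs_of_pos hnr, key]
    refine (abs_add_le _ _).trans ?_
    rw [abs_neg, abs_mul, abs_of_pos (show 0 < H^2/30 by positivity)]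
    have g1 : H^2/30 * |I - H * Sk| ≤ H^2/30 * (n * ((4*K+K*K2) * H^2)) := by gcongr
    have g2 : (K3 + (4*K+K*K2)) * H^5 * n^2 = n * ((K3 + (4*K+K*K2)) * lam * H^4) := by
      rw [← hnH]; ring
    have g3 : 0 < n * ((4*K+K*K2) * H^4) := by positivity
    nlinarith
  exact le_of_mul_le_mul_left fin hnr

theorem stmt_7 (x : ℝ → ℝ × ℝ) (lam : ℝ) (hlam : 0 < lam)
    (hx : ContDiff ℝ (⊤ : ℕ∞) x)
    (haff : ∀ t : ℝ, om (deriv x t) (iteratedDeriv 2 x t) = 1)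
    (hper : ∀ t : ℝ, x (t + lam) = x t)
    (hinj : Set.InjOn x (Set.Ico 0 lam))
    (C : Set (ℝ × ℝ)) (hC : C = convexHull ℝ (x '' Set.Icc 0 lam))
    (hcomp : IsCompact C) (hconv : StrictConvex ℝ C)
    (hbd : x '' Set.Icc 0 lam = frontier C)
    (k : ℝ → ℝ) (hk : ∀ t : ℝ, k t = om (iteratedDeriv 2 x t) (iteratedDeriv 3 x t))
    -- the vertex parameters of best approximating inscribed polygons
    (s : ℕ → ℤ → ℝ)
    (hs0 : ∀ n : ℕ, 3 ≤ n → 0 ≤ s n 1)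
    (hmono : ∀ n : ℕ, 3 ≤ n → ∀ i : ℤ, 1 ≤ i → i < (n : ℤ) → s n i < s n (i + 1))
    (hlast : ∀ n : ℕ, 3 ≤ n → s n (n : ℤ) < lam)
    (hcyc : ∀ n : ℕ, 3 ≤ n → ∀ i : ℤ, s n (i + (n : ℤ)) = s n i + lam)
    (hbest : ∀ n : ℕ, 3 ≤ n →
      (volume (convexHull ℝ
        (((Finset.Icc (1 : ℤ) (n : ℤ)).image fun i => x (s n i) : Finset (ℝ × ℝ)) :
          Set (ℝ × ℝ)))).toReal =
      sSup { A : ℝ | ∃ S : Finset (ℝ × ℝ), ↑S ⊆ frontier C ∧ S.card ≤ n ∧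
        A = (volume (convexHull ℝ (S : Set (ℝ × ℝ)))).toReal })
    -- the arc lengths λ_{n,i}
    (lamn : ℕ → ℤ → ℝ) (hlamn : ∀ n : ℕ, ∀ i : ℤ, lamn n i = s n i - s n (i - 1)) :
    -- conclusion: λ_{n,i} = λ/n − (λ²/(30n³))∫₀^λ k + (λ³/(30n³)) k(s_{n,i}) + o(1/n³)
    -- uniformly in i
    ∀ ε > (0 : ℝ), ∃ N : ℕ, ∀ n : ℕ, N ≤ n → ∀ i : ℤ, 1 ≤ i → i ≤ (n : ℤ) →
      (n : ℝ) ^ 3 *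
        |lamn n i - lam / n + lam ^ 2 / (30 * (n : ℝ) ^ 3) * (∫ t in (0:ℝ)..lam, k t) -
          lam ^ 3 / (30 * (n : ℝ) ^ 3) * k (s n i)| ≤ ε := by
  have hkper : Function.Periodic k lam := fun t => by
    rw [hk, hk, iter_periodic hper 2 t, iter_periodic hper 3 t]
  obtain ⟨k1, K, hK, hk0, hk1, hkd, hk2, hF⟩ := taylorF hlam hx haff hper hk
  intro ε hε
  set D := 1 + K + 32 * K * lam with hD
  have hD1 : 1 ≤ D := by have : 0 < 32 * K * lam := by positivity
                         linarith
  have hDp : 0 < D := by linarith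
  obtain ⟨N1, hN1⟩ := gap_small hlam hx haff hper hinj hcomp hconv hbd (1/D) (by positivity)
  set K2 := 256 * K * lam with hK2
  set K3 := 64*K + 256*K^2 + K*(4096*K+15*(256 * K * lam)) with hK3
  set K7 := (K3 + (4*K+K*K2)) * lam + (4*K+K*K2) with hK7
  obtain ⟨N2, hN2⟩ := exists_nat_ge (lam * (2 + 4*K))
  obtain ⟨N3, hN3⟩ := exists_nat_ge (K7 * lam^4 / ε)
  refine ⟨3 + N1 + N2 + N3, fun n hn i _ _ => ?_⟩
  have hn3 : 3 ≤ n := by omega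
  have hnr : (0:ℝ) < n := by have : 0 < n := by omega
                             exact_mod_cast this
  have hn2 : lam * (2 + 4*K) ≤ n := hN2.trans (by exact_mod_cast (by omega : N2 ≤ n))
  have hn4 : K7 * lam^4 / ε ≤ n := hN3.trans (by exact_mod_cast (by omega : N3 ≤ n))
  have hs := s_strictMono hn3 (hs0 n hn3) (hmono n hn3) (hlast n hn3) (hcyc n hn3)
  have hrange : (((Finset.Icc (1 : ℤ) (n : ℤ)).image fun i => x (s n i) : Finset (ℝ × ℝ)) :
          Set (ℝ × ℝ)) = Set.range fun i => x (s n i) := by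
    have hp : Function.Periodic (fun i => x (s n i)) (n:ℤ) := fun i => by
      simp only [hcyc n hn3, hper]
    ext y
    simp only [Finset.coe_image, Set.mem_image, Finset.mem_coe, Finset.mem_Icc, Set.mem_range]
    constructor
    · rintro ⟨i, -, e⟩; exact ⟨i, e⟩
    · rintro ⟨i, e⟩
      obtain ⟨j, hj, e2⟩ := hp.exists_mem_Ico (by omega) i 1
      exact ⟨j, ⟨hj.1, by have := hj.2; omega⟩, by rw [← e]; exact e2.symm⟩
  have hb := hbest n hn3
  rw [hrange] at hb
  have hopt : ∀ V : Set (ℝ × ℝ), V.Finite → V ⊆ frontier C → V.ncard ≤ n →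
      hullArea V ≤ hullArea (Set.range fun i => x (s n i)) := fun V h1 h2 h3 =>
    best_le hcomp hconv hb h1 h2 h3
  have hgap := hN1 n hn3 (by omega) (s n) hs (hcyc n hn3) hopt
  have hst := (poly_opt hlam hx haff hper hinj hcomp hconv hbd hn3 hs (hcyc n hn3) hopt).1
  have hl := hlamn n
  have hpos : ∀ i, 0 < lamn n i := fun i => by
    rw [hl]; have := hs (show i - 1 < i by omega); linarith
  have hE : ∀ i, |((lamn n (i+1))^2/2 - k (s n i)*(lamn n (i+1))^4/24
        - k1 (s n i)*(lamn n (i+1))^5/60) -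
      ((lamn n i)^2/2 - k (s n i)*(lamn n i)^4/24 + k1 (s n i)*(lamn n i)^5/60)| ≤
      K * ((lamn n (i+1))^6+(lamn n i)^6) := fun i => by
    have h1 := hF (s n i) (lamn n (i+1))
    have h2 := hF (s n i) (-lamn n i)
    rw [show s n i + lamn n (i+1) = s n (i+1) by rw [hl, add_sub_cancel_right]; ring,
      abs_of_pos (hpos _)] at h1
    rw [show s n i + -lamn n i = s n (i-1) by rw [hl]; ring, abs_neg, abs_of_pos (hpos _)] at h2
    have h3 := hst i
    have h4 : om (deriv x (s n i)) (x (s n (i+1)) - x (s n i)) =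
        om (deriv x (s n i)) (x (s n (i-1)) - x (s n i)) := by
      simp only [om, Prod.fst_sub, Prod.snd_sub] at h3 ⊢
      linarith
    rw [h4] at h1
    rw [abs_le] at h1 h2 ⊢
    constructor <;> nlinarith [h1.1, h1.2, h2.1, h2.2]
  set H := lam / n with hH
  have hHp : 0 < H := by positivity
  have hHE : H * (2 + 4*K) ≤ 1 := by
    rw [hH, div_mul_eq_mul_div, div_le_one hnr]; exact hn2
  have hKH : 0 < K * H := by positivity
  have hH2 : 2 * H ≤ 1 := by nlinarith
  have hH1 : H ≤ 1 := by linarith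
  have hHK : 4 * K * H^2 ≤ 1 := by
    have : K * H * H ≤ K * H * 1 := by gcongr
    nlinarith
  have hδ1 : 1/D ≤ 1 := by rw [div_le_one hDp]; exact hD1
  have hδ : (1/D)^2 ≤ 1/D := by
    have : 0 < 1/D := by positivity
    nlinarith
  have hδ2 : K * (1/D)^2 ≤ 1 := by
    have h1 : K * (1/D)^2 ≤ K * (1/D) := by gcongr
    have h2 : K * (1/D) ≤ 1 := by
      rw [mul_one_div, div_le_one hDp]
      have : 0 < K * lam := by positivity
      linarith
    linarith
  have hδ3 : 32 * K * lam * (1/D)^2 ≤ 1 := by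
    have h1 : 32 * K * lam * (1/D)^2 ≤ 32 * K * lam * (1/D) := by gcongr
    have h2 : 32 * K * lam * (1/D) ≤ 1 := by
      rw [mul_one_div, div_le_one hDp]
      linarith
    linarith
  obtain ⟨g1, g2, g3⟩ := gap_core2 hlam hK (by omega) hs (hcyc n hn3) hl hδ1 hδ2 hδ3
    (fun i => by rw [hl]; exact hgap i) (κ := fun i => k (s n i)) (κ' := fun i => k1 (s n i))
    (fun i => hk0 _) (fun i => hk1 _) hE hH hH1 hHK hH2
  have main := asymp_core hlam hK (by omega) hs (hcyc n hn3) hl hkper hk0 hk1 hkd hk2 hH hH1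
    (by positivity : 0 < K2) g1 g2 g3 i
  have e1 : H^2 / (30 * (n:ℝ)) = lam ^ 2 / (30 * (n : ℝ) ^ 3) := by rw [hH]; field_simp
  have e2 : H^3 / 30 = lam ^ 3 / (30 * (n : ℝ) ^ 3) := by rw [hH]; field_simp
  rw [e1, e2] at main
  calc _ ≤ (n:ℝ)^3 * (K7 * H^4) := by gcongr
    _ = K7 * lam^4 / n := by rw [hH]; field_simp
    _ ≤ ε := by
      rw [div_le_iff₀ hnr]
      rw [div_le_iff₀ hε] at hn4
      linarith
end

section
/- Let x : ℝ → ℝ² be a C^∞ curve parametrized by affine arc length with affine curvature k, and fix s₀ ∈ ℝ. For s near s₀ with s ≠ s₀, let T(s₀, s) := (1/2) · ω(x'(s), x(s) − x(s₀)) · ω(x'(s₀), x(s₀) − x(s)) / ω(x'(s₀), x'(s)) (the area of the triangle with vertices x(s₀), x(s) and the intersection point of the tangent lines to the curve at x(s₀) and x(s)). Then T(s₀, s) = (s − s₀)³/8 + (3·k(s₀)²/5760)·(s − s₀)⁷ + o((s − s₀)⁷) as s → s₀⁺. -/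
open Filter
open scoped Topology

theorem om_hasDerivAt {u v : ℝ → ℝ × ℝ} {u' v' : ℝ × ℝ} {s : ℝ}
    (hu : HasDerivAt u u' s) (hv : HasDerivAt v v' s) :
    HasDerivAt (fun t => om (u t) (v t)) (om u' (v s) + om (u s) v') s := by
  have hu1 : HasDerivAt (fun t => (u t).1) u'.1 s :=
    (ContinuousLinearMap.fst ℝ ℝ ℝ).hasFDerivAt.comp_hasDerivAt s hu
  have hu2 : HasDerivAt (fun t => (u t).2) u'.2 s :=
    (ContinuousLinearMap.snd ℝ ℝ ℝ).hasFDerivAt.comp_hasDerivAt s hu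
  have hv1 : HasDerivAt (fun t => (v t).1) v'.1 s :=
    (ContinuousLinearMap.fst ℝ ℝ ℝ).hasFDerivAt.comp_hasDerivAt s hv
  have hv2 : HasDerivAt (fun t => (v t).2) v'.2 s :=
    (ContinuousLinearMap.snd ℝ ℝ ℝ).hasFDerivAt.comp_hasDerivAt s hv
  unfold om
  refine ((hu1.mul hv2).sub (hu2.mul hv1)).congr_deriv ?_
  ring

theorem om_contDiff {u v : ℝ → ℝ × ℝ} (hu : ContDiff ℝ (⊤ : ℕ∞) u) (hv : ContDiff ℝ (⊤ : ℕ∞) v) :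
    ContDiff ℝ (⊤ : ℕ∞) (fun t => om (u t) (v t)) := by
  unfold om
  fun_prop

theorem smooth_hasDerivAt_iter {E : Type*} [NormedAddCommGroup E] [NormedSpace ℝ E]
    {f : ℝ → E} (hf : ContDiff ℝ (⊤ : ℕ∞) f) (n : ℕ) (s : ℝ) :
    HasDerivAt (iteratedDeriv n f) (iteratedDeriv (n + 1) f s) s := by
  rw [iteratedDeriv_succ]
  apply DifferentiableAt.hasDerivAt
  exact (hf.differentiable_iteratedDeriv n (by exact_mod_cast ENat.natCast_lt_top n)) s

theorem smooth_iter {E : Type*} [NormedAddCommGroup E] [NormedSpace ℝ E]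
    {f : ℝ → E} (hf : ContDiff ℝ (⊤ : ℕ∞) f) (n : ℕ) :
    ContDiff ℝ (⊤ : ℕ∞) (iteratedDeriv n f) := by
  rw [iteratedDeriv_eq_iterate]
  exact hf.iterate_deriv n

/-- Taylor with a vanishing remainder factor. -/
theorem taylor_eps {f : ℝ → ℝ} (hf : ContDiff ℝ (⊤ : ℕ∞) f) (s₀ : ℝ) (n : ℕ) :
    ∃ e : ℝ → ℝ, Tendsto e (𝓝[>] s₀) (𝓝 0) ∧ ∀ s, s₀ < s →
      f s = ∑ i ∈ Finset.range (n + 1), ((i.factorial : ℝ)⁻¹ * (s - s₀) ^ i) * iteratedDeriv i f s₀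
        + (s - s₀) ^ n * e s := by
  refine ⟨fun s => (f s - taylorWithinEval f n Set.univ s₀ s) / (s - s₀) ^ n, ?_, ?_⟩
  · have := Real.taylor_tendsto (n := n) convex_univ (Set.mem_univ s₀)
      ((hf.of_le (by exact_mod_cast le_top)).contDiffOn)
    rw [nhdsWithin_univ] at this
    exact this.mono_left nhdsWithin_le_nhds
  · intro s hs
    have h : (s - s₀) ^ n ≠ 0 := pow_ne_zero _ (sub_pos.2 hs).ne'
    simp only [taylor_within_apply, iteratedDerivWithin_univ, smul_eq_mul]
    field_simp
    ring

theorem ode_derivs {f k : ℝ → ℝ} (hf : ContDiff ℝ (⊤ : ℕ∞) f) (hk : ContDiff ℝ (⊤ : ℕ∞) k)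
    (c : ℝ) (h : iteratedDeriv 2 f = fun s => c - k s * f s) (n : ℕ) (s : ℝ) :
    iteratedDeriv (n + 2) f s = iteratedDeriv n (fun _ : ℝ => c) s - ∑ i ∈ Finset.range (n + 1),
      n.choose i * iteratedDeriv i k s * iteratedDeriv (n - i) f s := by
  have e : iteratedDeriv (n + 2) f = iteratedDeriv n (iteratedDeriv 2 f) := by
    simp only [iteratedDeriv_eq_iterate, Function.iterate_add_apply]
  have hn : ((n : ℕ∞) : WithTop ℕ∞) ≤ ((⊤ : ℕ∞) : WithTop ℕ∞) := by exact_mod_cast le_top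
  have hf' : ContDiffAt ℝ n f s := (hf.of_le hn).contDiffAt
  have hk' : ContDiffAt ℝ n k s := (hk.of_le hn).contDiffAt
  rw [e, h, ← iteratedDeriv_mul hk' hf']
  exact iteratedDeriv_fun_sub contDiffAt_const (hk'.mul hf')

theorem final_algebra (k0 k1 k2 t e1 e2 e3 : ℝ) (ht : t ≠ 0)
    (hd : 1 - k0 / 6 * t ^ 2 - k1 / 12 * t ^ 3 + (k0 ^ 2 - 3 * k2) / 120 * t ^ 4 + t ^ 4 * e3 ≠ 0) :
    (1 / 2) * (t ^ 2 * (1 / 2 - k0 / 24 * t ^ 2 - k1 / 40 * t ^ 3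
        + (k0 ^ 2 - 6 * k2) / 720 * t ^ 4 + t ^ 4 * e1))
      * (t ^ 2 * (1 / 2 - k0 / 24 * t ^ 2 - k1 / 60 * t ^ 3
        + (k0 ^ 2 - 3 * k2) / 720 * t ^ 4 + t ^ 4 * e2))
      / (t * (1 - k0 / 6 * t ^ 2 - k1 / 12 * t ^ 3 + (k0 ^ 2 - 3 * k2) / 120 * t ^ 4 + t ^ 4 * e3))
      - (t ^ 3 / 8 + 3 * k0 ^ 2 / 5760 * t ^ 7)
    = (t * ((k0 * k1 / 24 / 60 + k0 * k1 / 24 / 40)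
        + (-k0 / 24 * ((k0 ^ 2 - 3 * k2) / 720) - k0 / 24 * ((k0 ^ 2 - 6 * k2) / 720)
            + k1 ^ 2 / 2400 + k0 ^ 2 / 960 * k0 / 6) * t
        + (-k1 / 40 * ((k0 ^ 2 - 3 * k2) / 720) - k1 / 60 * ((k0 ^ 2 - 6 * k2) / 720)
            + k0 ^ 2 / 960 * k1 / 12) * t ^ 2
        + ((k0 ^ 2 - 6 * k2) / 720 * ((k0 ^ 2 - 3 * k2) / 720)
            - k0 ^ 2 / 960 * ((k0 ^ 2 - 3 * k2) / 120)) * t ^ 3)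
        + e1 * (1 / 2 - k0 / 24 * t ^ 2 - k1 / 60 * t ^ 3
          + (k0 ^ 2 - 3 * k2) / 720 * t ^ 4 + t ^ 4 * e2)
        + e2 * (1 / 2 - k0 / 24 * t ^ 2 - k1 / 40 * t ^ 3 + (k0 ^ 2 - 6 * k2) / 720 * t ^ 4)
        - 2 * e3 * (1 / 8 + k0 ^ 2 / 1920 * t ^ 4))
      / (2 * (1 - k0 / 6 * t ^ 2 - k1 / 12 * t ^ 3
          + (k0 ^ 2 - 3 * k2) / 120 * t ^ 4 + t ^ 4 * e3)) * t ^ 7 := by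
  generalize hD : 1 - k0 / 6 * t ^ 2 - k1 / 12 * t ^ 3 + (k0 ^ 2 - 3 * k2) / 120 * t ^ 4
    + t ^ 4 * e3 = D at *
  rw [div_sub' (by positivity), div_mul_eq_mul_div _ (2 * D) (t ^ 7), div_eq_div_iff (by positivity) (by positivity),
    ← hD]
  ring

theorem stmt_8 (x : ℝ → ℝ × ℝ) (hx : ContDiff ℝ (⊤ : ℕ∞) x)
    (haff : ∀ s : ℝ, om (deriv x s) (iteratedDeriv 2 x s) = 1)
    (k : ℝ → ℝ) (hk : ∀ s : ℝ, k s = om (iteratedDeriv 2 x s) (iteratedDeriv 3 x s))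
    (s₀ : ℝ) (T : ℝ → ℝ)
    (hT : ∀ s : ℝ, T s =
      (1 / 2) * om (deriv x s) (x s - x s₀) * om (deriv x s₀) (x s₀ - x s) /
        om (deriv x s₀) (deriv x s)) :
    (fun s : ℝ => T s - ((s - s₀) ^ 3 / 8 + 3 * (k s₀) ^ 2 / 5760 * (s - s₀) ^ 7))
      =o[𝓝[>] s₀] fun s : ℝ => (s - s₀) ^ 7 := by
  have X := smooth_hasDerivAt_iter hx
  have S := smooth_iter hx
  have h1 : deriv x = iteratedDeriv 1 x := iteratedDeriv_one.symm
  rw [h1] at haff hT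
  have X0 : ∀ s, HasDerivAt x (iteratedDeriv 1 x s) s := fun s => by
    simpa using X 0 s
  have hks : ContDiff ℝ (⊤ : ℕ∞) k := by
    rw [funext hk]; exact om_contDiff (S 2) (S 3)
  have h13 : ∀ s, om (iteratedDeriv 1 x s) (iteratedDeriv 3 x s) = 0 := by
    intro s
    have a := om_hasDerivAt (X 1 s) (X 2 s)
    simp only [Nat.reduceAdd, haff] at a
    have b := a.unique (hasDerivAt_const s (1 : ℝ))
    have c : om (iteratedDeriv 2 x s) (iteratedDeriv 2 x s) = 0 := by unfold om; ring
    linarith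
  have hw : ∀ w s, om w (iteratedDeriv 3 x s) = - k s * om w (iteratedDeriv 1 x s) := by
    intro w s
    have a := h13 s
    have b := haff s
    rw [hk]
    unfold om at *
    linear_combination (-(w.1 * (iteratedDeriv 3 x s).2 - w.2 * (iteratedDeriv 3 x s).1)) * b
      + (w.1 * (iteratedDeriv 2 x s).2 - w.2 * (iteratedDeriv 2 x s).1) * a
  set b : ℝ → ℝ := fun s => om (iteratedDeriv 1 x s₀) (iteratedDeriv 1 x s) with hb
  set B : ℝ → ℝ := fun s => om (iteratedDeriv 1 x s₀) (x s - x s₀) with hB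
  set P : ℝ → ℝ := fun s => om (x s - x s₀) (iteratedDeriv 1 x s) with hP
  have om0 : ∀ w, om 0 w = 0 := fun w => by simp [om]
  have om0' : ∀ w, om w 0 = 0 := fun w => by simp [om]
  have oms : ∀ w, om w w = 0 := fun w => by unfold om; ring
  have hbs : ContDiff ℝ (⊤ : ℕ∞) b := om_contDiff contDiff_const (S 1)
  have hBs : ContDiff ℝ (⊤ : ℕ∞) B := om_contDiff contDiff_const (hx.sub contDiff_const)
  have hPs : ContDiff ℝ (⊤ : ℕ∞) P := om_contDiff (hx.sub contDiff_const) (S 1)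
  have db : deriv b = fun s => om (iteratedDeriv 1 x s₀) (iteratedDeriv 2 x s) := by
    ext s
    have := (om_hasDerivAt (hasDerivAt_const s (iteratedDeriv 1 x s₀)) (X 1 s)).deriv
    rw [om0, zero_add] at this; exact this
  have db2 : iteratedDeriv 2 b = fun s => 0 - k s * b s := by
    rw [iteratedDeriv_succ, iteratedDeriv_one, db]
    ext s
    have := (om_hasDerivAt (hasDerivAt_const s (iteratedDeriv 1 x s₀)) (X 2 s)).deriv
    rw [this, om0, hw]
    simp [hb]
  have dB : deriv B = b := by
    ext s
    have := (om_hasDerivAt (hasDerivAt_const s (iteratedDeriv 1 x s₀))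
      ((X0 s).sub_const (x s₀))).deriv
    rw [om0, zero_add] at this; exact this
  have dP : deriv P = fun s => om (x s - x s₀) (iteratedDeriv 2 x s) := by
    ext s
    have := (om_hasDerivAt ((X0 s).sub_const (x s₀)) (X 1 s)).deriv
    rw [oms, zero_add] at this; exact this
  have dP2 : iteratedDeriv 2 P = fun s => 1 - k s * P s := by
    rw [iteratedDeriv_succ, iteratedDeriv_one, dP]
    ext s
    have := (om_hasDerivAt ((X0 s).sub_const (x s₀)) (X 2 s)).deriv
    rw [this, haff, hw]
    simp only [hP]; ring
  have b0 : iteratedDeriv 0 b s₀ = 0 := by simp [hb, oms]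
  have b1 : iteratedDeriv 1 b s₀ = 1 := by rw [iteratedDeriv_one, db]; exact haff s₀
  have P0 : iteratedDeriv 0 P s₀ = 0 := by simp [hP, om0]
  have P1 : iteratedDeriv 1 P s₀ = 0 := by rw [iteratedDeriv_one, dP]; simp [om0]
  have ob := fun n => ode_derivs hbs hks 0 db2 n s₀
  have oP := fun n => ode_derivs hPs hks 1 dP2 n s₀
  have k00 : iteratedDeriv 0 k s₀ = k s₀ := by simp
  set k0 := k s₀
  set k1 := iteratedDeriv 1 k s₀ with hk1
  set k2 := iteratedDeriv 2 k s₀ with hk2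
  have b2 : iteratedDeriv 2 b s₀ = 0 := by
    rw [ob 0]; simp only [Finset.sum_range_succ, Finset.sum_range_zero, Nat.sub_self, b0]
    simp [iteratedDeriv_const]
  have b3 : iteratedDeriv 3 b s₀ = -k0 := by
    rw [ob 1]
    norm_num [Finset.sum_range_succ, iteratedDeriv_const, Nat.choose, b0, b1, b2, k00, -iteratedDeriv_zero, -iteratedDeriv_one]
  have b4 : iteratedDeriv 4 b s₀ = -2 * k1 := by
    rw [ob 2]
    norm_num [Finset.sum_range_succ, iteratedDeriv_const, Nat.choose, b0, b1, b2, b3, k00, -iteratedDeriv_zero, -iteratedDeriv_one]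
    try ring
  have b5 : iteratedDeriv 5 b s₀ = k0 ^ 2 - 3 * k2 := by
    rw [ob 3]
    norm_num [Finset.sum_range_succ, iteratedDeriv_const, Nat.choose, b0, b1, b2, b3, b4, k00, -iteratedDeriv_zero, -iteratedDeriv_one]
    try ring
  have P2 : iteratedDeriv 2 P s₀ = 1 := by
    rw [oP 0]; simp only [Finset.sum_range_succ, Finset.sum_range_zero, Nat.sub_self, P0]
    simp [iteratedDeriv_const]
  have P3 : iteratedDeriv 3 P s₀ = 0 := by
    rw [oP 1]
    norm_num [Finset.sum_range_succ, iteratedDeriv_const, Nat.choose, P0, P1, P2, k00, -iteratedDeriv_zero, -iteratedDeriv_one]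
  have P4 : iteratedDeriv 4 P s₀ = -k0 := by
    rw [oP 2]
    norm_num [Finset.sum_range_succ, iteratedDeriv_const, Nat.choose, P0, P1, P2, P3, k00, -iteratedDeriv_zero, -iteratedDeriv_one]
  have P5 : iteratedDeriv 5 P s₀ = -3 * k1 := by
    rw [oP 3]
    norm_num [Finset.sum_range_succ, iteratedDeriv_const, Nat.choose, P0, P1, P2, P3, P4, k00, -iteratedDeriv_zero, -iteratedDeriv_one]
    try ring
  have P6 : iteratedDeriv 6 P s₀ = k0 ^ 2 - 6 * k2 := by
    rw [oP 4]
    norm_num [Finset.sum_range_succ, iteratedDeriv_const, Nat.choose, P0, P1, P2, P3, P4, P5, k00, -iteratedDeriv_zero, -iteratedDeriv_one]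
    try ring
  have B0 : iteratedDeriv 0 B s₀ = 0 := by simp [hB, om0']
  have Bn : ∀ n, iteratedDeriv (n + 1) B s₀ = iteratedDeriv n b s₀ := fun n => by
    rw [iteratedDeriv_succ', dB]
  obtain ⟨e1, l1, E1⟩ := taylor_eps hPs s₀ 6
  obtain ⟨e2, l2, E2⟩ := taylor_eps hBs s₀ 6
  obtain ⟨e3, l3, E3⟩ := taylor_eps hbs s₀ 5
  have B1 := Bn 0
  have B2 := Bn 1
  have B3 := Bn 2
  have B4 := Bn 3
  have B5 := Bn 4
  have B6 := Bn 5
  simp only [Nat.reduceAdd, b0, b1, b2, b3, b4, b5] at B1 B2 B3 B4 B5 B6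
  simp only [Finset.sum_range_succ, Finset.sum_range_zero, Nat.reduceAdd,
    P0, P1, P2, P3, P4, P5, P6, b0, b1, b2, b3, b4, b5, B0, B1, B2, B3, B4, B5, B6,
    Nat.factorial] at E1 E2 E3
  have lt : Tendsto (fun s : ℝ => s - s₀) (𝓝[>] s₀) (𝓝 0) := by
    have : Tendsto (fun s : ℝ => s - s₀) (𝓝 s₀) (𝓝 (s₀ - s₀)) :=
      (continuous_id.sub continuous_const).tendsto s₀
    rw [sub_self] at this
    exact this.mono_left nhdsWithin_le_nhds
  have lq : Tendsto (fun s : ℝ => (s - s₀, e1 s, e2 s, e3 s)) (𝓝[>] s₀) (𝓝 (0, 0, 0, 0)) :=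
    lt.prodMk_nhds (l1.prodMk_nhds (l2.prodMk_nhds l3))
  let D : ℝ × ℝ × ℝ × ℝ → ℝ := fun q => 1 - k0 / 6 * q.1 ^ 2 - k1 / 12 * q.1 ^ 3
    + (k0 ^ 2 - 3 * k2) / 120 * q.1 ^ 4 + q.1 ^ 4 * q.2.2.2
  let N : ℝ × ℝ × ℝ × ℝ → ℝ := fun q => (q.1 * ((k0 * k1 / 24 / 60 + k0 * k1 / 24 / 40)
        + (-k0 / 24 * ((k0 ^ 2 - 3 * k2) / 720) - k0 / 24 * ((k0 ^ 2 - 6 * k2) / 720)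
            + k1 ^ 2 / 2400 + k0 ^ 2 / 960 * k0 / 6) * q.1
        + (-k1 / 40 * ((k0 ^ 2 - 3 * k2) / 720) - k1 / 60 * ((k0 ^ 2 - 6 * k2) / 720)
            + k0 ^ 2 / 960 * k1 / 12) * q.1 ^ 2
        + ((k0 ^ 2 - 6 * k2) / 720 * ((k0 ^ 2 - 3 * k2) / 720)
            - k0 ^ 2 / 960 * ((k0 ^ 2 - 3 * k2) / 120)) * q.1 ^ 3)
        + q.2.1 * (1 / 2 - k0 / 24 * q.1 ^ 2 - k1 / 60 * q.1 ^ 3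
          + (k0 ^ 2 - 3 * k2) / 720 * q.1 ^ 4 + q.1 ^ 4 * q.2.2.1)
        + q.2.2.1 * (1 / 2 - k0 / 24 * q.1 ^ 2 - k1 / 40 * q.1 ^ 3
          + (k0 ^ 2 - 6 * k2) / 720 * q.1 ^ 4)
        - 2 * q.2.2.2 * (1 / 8 + k0 ^ 2 / 1920 * q.1 ^ 4))
  have cD : Continuous D := by fun_prop
  have cN : Continuous N := by fun_prop
  have D0 : D (0, 0, 0, 0) = 1 := by simp [D]
  have N0 : N (0, 0, 0, 0) = 0 := by simp [N]
  have lD := (cD.tendsto (0, 0, 0, 0)).comp lq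
  have lN := (cN.tendsto (0, 0, 0, 0)).comp lq
  rw [D0] at lD
  rw [N0] at lN
  have lH := lN.div (lD.const_mul 2) (by norm_num)
  rw [zero_div] at lH
  rw [Asymptotics.isLittleO_iff_exists_eq_mul]
  refine ⟨_, lH, ?_⟩
  filter_upwards [lD.eventually_ne one_ne_zero, self_mem_nhdsWithin] with s hs hs0
  have ht : s - s₀ ≠ 0 := (sub_pos.2 hs0).ne'
  have F := final_algebra k0 k1 k2 (s - s₀) (e1 s) (e2 s) (e3 s) ht hs
  refine Eq.trans ?_ F
  rw [hT s]
  have o1 : om (iteratedDeriv 1 x s) (x s - x s₀) = - P s := by simp only [hP, om]; ring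
  have o2 : om (iteratedDeriv 1 x s₀) (x s₀ - x s) = - B s := by
    simp only [hB, om, Prod.fst_sub, Prod.snd_sub]; ring
  have o3 : om (iteratedDeriv 1 x s₀) (iteratedDeriv 1 x s) = b s := rfl
  rw [o1, o2, o3]
  have G1 := E1 s hs0
  have G2 := E2 s hs0
  have G3 := E3 s hs0
  have Q1 : P s = _ := G1.trans (b := _) (c := ((s - s₀) ^ 2 * (1 / 2 - k0 / 24 * (s - s₀) ^ 2
      - k1 / 40 * (s - s₀) ^ 3 + (k0 ^ 2 - 6 * k2) / 720 * (s - s₀) ^ 4 + (s - s₀) ^ 4 * e1 s)))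
      (by push_cast; ring)
  have Q2 : B s = _ := G2.trans (b := _) (c := ((s - s₀) ^ 2 * (1 / 2 - k0 / 24 * (s - s₀) ^ 2
      - k1 / 60 * (s - s₀) ^ 3 + (k0 ^ 2 - 3 * k2) / 720 * (s - s₀) ^ 4 + (s - s₀) ^ 4 * e2 s)))
      (by push_cast; ring)
  have Q3 : b s = _ := G3.trans (b := _) (c := ((s - s₀) * (1 - k0 / 6 * (s - s₀) ^ 2
      - k1 / 12 * (s - s₀) ^ 3 + (k0 ^ 2 - 3 * k2) / 120 * (s - s₀) ^ 4 + (s - s₀) ^ 4 * e3 s)))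
      (by push_cast; ring)
  rw [← Q1, ← Q2, ← Q3]
  ring
end

section
/- Let x : ℝ → ℝ² be a C^∞ curve parametrized by affine arc length with affine curvature k, and fix s₀ ∈ ℝ. Define G(s) := ω(x'(s), x(s) − x(s₀)) / ω(x'(s), x'(s₀)) for s near s₀ (with G(s₀) = 0). Then there exist δ > 0 and a C^∞ function τ : (s₀ − δ, s₀ + δ) → ℝ with τ(s₀) = s₀ and τ'(s₀) = −1, such that G(s) = −G(τ(s)) for all |s − s₀| < δ, and moreover τ(s) = 2s₀ − s − (8/120)·k'(s₀)·(s − s₀)⁴ + o((s − s₀)⁵) as s → s₀. -/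
open Filter
open scoped Topology

theorem aux_hasDeriv (n : ℕ) (g : ℝ → ℝ) (hg : ContDiff ℝ (⊤ : ℕ∞) g) (s : ℝ) :
    HasDerivAt (fun s : ℝ => ∫ t in (0:ℝ)..1, t ^ n * g (t * s))
      (∫ t in (0:ℝ)..1, t ^ (n + 1) * deriv g (t * s)) s := by
  have hgc : Continuous g := hg.continuous
  have hg1 : ContDiff ℝ (⊤ : ℕ∞) (deriv g) := (contDiff_infty_iff_deriv.1 hg).2
  have hg1c : Continuous (deriv g) := hg1.continuous
  have hgd : Differentiable ℝ g := (contDiff_infty_iff_deriv.1 hg).1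
  obtain ⟨C, hC⟩ := (isCompact_Icc (a := -(|s| + 1)) (b := |s| + 1)).exists_bound_of_continuousOn
    hg1c.continuousOn
  refine (intervalIntegral.hasDerivAt_integral_of_dominated_loc_of_deriv_le
    (F := fun s t => t ^ n * g (t * s)) (F' := fun s t => t ^ (n + 1) * deriv g (t * s))
    (s := Metric.ball s 1) (bound := fun _ => C) (Metric.ball_mem_nhds s one_pos) ?_ ?_ ?_ ?_ ?_ ?_).2
  · exact Filter.Eventually.of_forall fun x =>
      (show Continuous fun t : ℝ => t ^ n * g (t * x) by fun_prop).aestronglyMeasurable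
  · exact (show Continuous fun t : ℝ => t ^ n * g (t * s) by fun_prop).intervalIntegrable _ _
  · exact (show Continuous fun t : ℝ => t ^ (n+1) * deriv g (t * s) by
      fun_prop).aestronglyMeasurable
  · refine Filter.Eventually.of_forall fun t ht x hx => ?_
    rw [Set.uIoc_of_le zero_le_one] at ht
    have hx' : |x - s| < 1 := by simpa [Real.dist_eq] using hx
    have h1 : |x| ≤ |s| + 1 := by
      have := abs_sub_abs_le_abs_sub x s
      linarith
    have h2 : |t * x| ≤ |s| + 1 := by
      rw [abs_mul, abs_of_pos ht.1]
      nlinarith [abs_nonneg x, ht.2]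
    have h3 := hC (t * x) (abs_le.1 h2)
    have h4 : t ^ (n + 1) ≤ 1 := pow_le_one₀ ht.1.le ht.2
    have h5 : 0 ≤ t ^ (n + 1) := pow_nonneg ht.1.le _
    rw [norm_mul, Real.norm_of_nonneg h5]
    nlinarith [norm_nonneg (deriv g (t * x))]
  · exact intervalIntegrable_const
  · refine Filter.Eventually.of_forall fun t _ x _ => ?_
    have h := ((hgd (t * x)).hasDerivAt.comp x ((hasDerivAt_id x).const_mul t)).const_mul (t ^ n)
    refine h.congr_deriv ?_
    ring

theorem aux_contDiff (m : ℕ) : ∀ (n : ℕ) (g : ℝ → ℝ), ContDiff ℝ (⊤ : ℕ∞) g →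
    ContDiff ℝ m (fun s : ℝ => ∫ t in (0:ℝ)..1, t ^ n * g (t * s)) := by
  induction m with
  | zero =>
    intro n g hg
    have : Differentiable ℝ (fun s : ℝ => ∫ t in (0:ℝ)..1, t ^ n * g (t * s)) :=
      fun s => (aux_hasDeriv n g hg s).differentiableAt
    exact contDiff_zero.2 this.continuous
  | succ m ih =>
    intro n g hg
    push_cast
    rw [contDiff_succ_iff_deriv]
    refine ⟨fun s => (aux_hasDeriv n g hg s).differentiableAt, by simp, ?_⟩
    rw [show deriv (fun s : ℝ => ∫ t in (0:ℝ)..1, t ^ n * g (t * s)) =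
      fun s => ∫ t in (0:ℝ)..1, t ^ (n + 1) * deriv g (t * s) from
      funext fun s => (aux_hasDeriv n g hg s).deriv]
    exact ih _ _ (contDiff_infty_iff_deriv.1 hg).2

theorem aux_hadamard (n : ℕ) (f g : ℝ → ℝ) (hg : ContDiff ℝ (⊤ : ℕ∞) g) (h0 : f 0 = 0)
    (hf : ∀ s, HasDerivAt f (s ^ n * g s) s) :
    ∃ h : ℝ → ℝ, ContDiff ℝ (⊤ : ℕ∞) h ∧ ∀ s, f s = s ^ (n + 1) * h s := by
  refine ⟨_, contDiff_infty.2 fun m => aux_contDiff m n g hg, fun s => ?_⟩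
  have hgc : Continuous g := hg.continuous
  have h := intervalIntegral.integral_eq_sub_of_hasDerivAt (a := 0) (b := 1)
    (f := fun t : ℝ => f (t * s)) (f' := fun t : ℝ => s ^ (n + 1) * (t ^ n * g (t * s))) ?_ ?_
  · rw [intervalIntegral.integral_const_mul] at h
    simp only [one_mul, zero_mul, h0, sub_zero] at h
    exact h.symm
  · intro t _
    have h := (hf (t * s)).comp t ((hasDerivAt_id t).mul_const s)
    refine h.congr_deriv ?_
    ring
  · exact (show Continuous fun t : ℝ => s ^ (n + 1) * (t ^ n * g (t * s)) by
      fun_prop).intervalIntegrable _ _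

theorem aux_int (n : ℕ) (f d g : ℝ → ℝ) (hg : ContDiff ℝ (⊤ : ℕ∞) g)
    (e0 e1 e2 e3 : ℝ) (hf : ∀ s, HasDerivAt f (d s) s)
    (hd : ∀ s, d s = e0 + e1 * s + e2 * s ^ 2 + e3 * s ^ 3 + s ^ n * g s) :
    ∃ h : ℝ → ℝ, ContDiff ℝ (⊤ : ℕ∞) h ∧
      ∀ s, f s = f 0 + e0 * s + e1 / 2 * s ^ 2 + e2 / 3 * s ^ 3 + e3 / 4 * s ^ 4
        + s ^ (n + 1) * h s := by
  obtain ⟨h, hh, he⟩ := aux_hadamard n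
    (fun s => f s - (f 0 + e0 * s + e1 / 2 * s ^ 2 + e2 / 3 * s ^ 3 + e3 / 4 * s ^ 4)) g hg
    (by simp) (by
      intro s
      have h := (hf s).sub (((((((hasDerivAt_id s).const_mul e0).const_add (f 0)).add
        ((hasDerivAt_pow 2 s).const_mul (e1 / 2))).add
        ((hasDerivAt_pow 3 s).const_mul (e2 / 3))).add
        ((hasDerivAt_pow 4 s).const_mul (e3 / 4))))
      refine h.congr_deriv ?_
      rw [hd s]
      norm_num
      ring)
  exact ⟨h, hh, fun s => by linarith [he s]⟩

theorem aux_k (k : ℝ → ℝ) (hk : ContDiff ℝ (⊤ : ℕ∞) k) :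
    ∃ (k2 : ℝ) (r2 r3 : ℝ → ℝ), ContDiff ℝ (⊤ : ℕ∞) r2 ∧ ContDiff ℝ (⊤ : ℕ∞) r3 ∧
      (∀ s, k s = k 0 + deriv k 0 * s + s ^ 2 * r2 s) ∧
      (∀ s, k s = k 0 + deriv k 0 * s + k2 * s ^ 2 + s ^ 3 * r3 s) := by
  have h1 := contDiff_infty_iff_deriv.1 hk
  have h2 := contDiff_infty_iff_deriv.1 h1.2
  obtain ⟨u, hu, hu'⟩ := aux_int 0 (deriv k) (deriv (deriv k)) _ h2.2 0 0 0 0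
    (fun s => (h2.1 s).hasDerivAt) (fun s => by simp)
  obtain ⟨v, hv, hv'⟩ := aux_int 1 k (deriv k) u hu (deriv k 0) 0 0 0
    (fun s => (h1.1 s).hasDerivAt) (fun s => by rw [hu' s]; ring)
  have h3 := contDiff_infty_iff_deriv.1 hv
  obtain ⟨w, hw, hw'⟩ := aux_int 0 v (deriv v) _ h3.2 0 0 0 0
    (fun s => (h3.1 s).hasDerivAt) (fun s => by simp)
  refine ⟨v 0, v, w, hv, hw, fun s => ?_, fun s => ?_⟩
  · rw [hv' s]; ring
  · rw [hv' s, hw' s]; ring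

theorem aux_ode (k y y1 : ℝ → ℝ) (k0 k1 k2 : ℝ) (r2 r3 : ℝ → ℝ)
    (hr2 : ContDiff ℝ (⊤ : ℕ∞) r2) (hr3 : ContDiff ℝ (⊤ : ℕ∞) r3)
    (hk2 : ∀ s, k s = k0 + k1 * s + s ^ 2 * r2 s)
    (hk3 : ∀ s, k s = k0 + k1 * s + k2 * s ^ 2 + s ^ 3 * r3 s)
    (hk : ContDiff ℝ (⊤ : ℕ∞) k) (hy : ContDiff ℝ (⊤ : ℕ∞) y)
    (h1 : ∀ s, HasDerivAt y (y1 s) s) (h2 : ∀ s, HasDerivAt y1 (-(k s * y s)) s) :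
    ∃ r : ℝ → ℝ, ContDiff ℝ (⊤ : ℕ∞) r ∧ ∀ s, y s = y 0 + y1 0 * s - k0 * y 0 / 2 * s ^ 2
      - (k0 * y1 0 + k1 * y 0) / 6 * s ^ 3
      - (k2 * y 0 + k1 * y1 0 - k0 * (k0 * y 0) / 2) / 12 * s ^ 4 + s ^ 5 * r s := by
  set p := y 0 with hp
  set q := y1 0 with hq
  obtain ⟨u, hu, hu'⟩ := aux_int 0 y1 _ (fun s => -(k s * y s)) (by fun_prop) 0 0 0 0 h2
    (fun s => by ring)
  obtain ⟨v, hv, hv'⟩ := aux_int 1 y y1 u hu q 0 0 0 h1 (fun s => by rw [hu' s]; ring)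
  obtain ⟨u2, hu2, hu2'⟩ := aux_int 2 y1 _
    (fun s => -(k0 * v s + k1 * (q + s * v s) + r2 s * (p + q * s + s ^ 2 * v s)))
    (by fun_prop) (-(k0 * p)) (-(k0 * q + k1 * p)) 0 0 h2
    (fun s => by rw [hk2 s, hv' s, ← hp]; ring)
  obtain ⟨v2, hv2, hv2'⟩ := aux_int 3 y y1 u2 hu2 q (-(k0 * p)) (-(k0 * q + k1 * p) / 2) 0 h1
    (fun s => by rw [hu2' s]; ring)
  obtain ⟨u3, hu3, hu3'⟩ := aux_int 3 y1 _
    (fun s => -(k0 * (- (k0 * q + k1 * p) / 6 + s * v2 s)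
      + k1 * (- (k0 * p) / 2 - (k0 * q + k1 * p) / 6 * s + s ^ 2 * v2 s)
      + k2 * (q - (k0 * p) / 2 * s - (k0 * q + k1 * p) / 6 * s ^ 2 + s ^ 3 * v2 s)
      + r3 s * (p + q * s - (k0 * p) / 2 * s ^ 2 - (k0 * q + k1 * p) / 6 * s ^ 3 + s ^ 4 * v2 s)))
    (by fun_prop) (-(k0 * p)) (-(k0 * q + k1 * p)) (-(k2 * p + k1 * q - k0 * (k0 * p) / 2)) 0 h2
    (fun s => by rw [hk3 s, hv2' s, ← hp]; ring)
  obtain ⟨v3, hv3, hv3'⟩ := aux_int 4 y y1 u3 hu3 q (-(k0 * p)) (-(k0 * q + k1 * p) / 2)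
    (-(k2 * p + k1 * q - k0 * (k0 * p) / 2) / 3) h1
    (fun s => by rw [hu3' s]; ring)
  refine ⟨v3, hv3, fun s => ?_⟩
  rw [hv3' s]
  ring

theorem aux_core (k a a1 A b b1 B : ℝ → ℝ) (hk : ContDiff ℝ (⊤ : ℕ∞) k)
    (ha : ContDiff ℝ (⊤ : ℕ∞) a) (hb : ContDiff ℝ (⊤ : ℕ∞) b)
    (ha1 : ∀ s, HasDerivAt a (a1 s) s) (ha2 : ∀ s, HasDerivAt a1 (-(k s * a s)) s)
    (hb1 : ∀ s, HasDerivAt b (b1 s) s) (hb2 : ∀ s, HasDerivAt b1 (-(k s * b s)) s)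
    (hA : ∀ s, HasDerivAt A (a s) s) (hB : ∀ s, HasDerivAt B (b s) s)
    (a0 : a 0 = 1) (a10 : a1 0 = 0) (b0 : b 0 = 0) (b10 : b1 0 = 1) (A0 : A 0 = 0) (B0 : B 0 = 0) :
    ∃ β R : ℝ → ℝ, ContDiff ℝ (⊤ : ℕ∞) β ∧ ContDiff ℝ (⊤ : ℕ∞) R ∧ β 0 = 1 ∧
      (∀ s, b s = s * β s) ∧
      (∀ s, b s * A s - a s * B s =
        s * β s * (s / 2 + k 0 / 24 * s ^ 3 + deriv k 0 / 60 * s ^ 4) + s ^ 6 * R s) := by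
  obtain ⟨k2, r2, r3, hr2, hr3, hk2, hk3⟩ := aux_k k hk
  obtain ⟨u, hu, hu'⟩ := aux_ode k a a1 _ _ k2 r2 r3 hr2 hr3 hk2 hk3 hk ha ha1 ha2
  obtain ⟨v, hv, hv'⟩ := aux_ode k b b1 _ _ k2 r2 r3 hr2 hr3 hk2 hk3 hk hb hb1 hb2
  set k0 := k 0
  set k1 := deriv k 0
  simp only [a0, a10, b0, b10, mul_zero, mul_one, zero_mul, add_zero, zero_add, zero_div,
    sub_zero] at hu' hv'
  obtain ⟨U, hU, hU'⟩ := aux_int 4 A a (fun s => - (k2 - k0 * k0 / 2) / 12 + s * u s)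
    (by fun_prop) 1 0 (-k0 / 2) (-k1 / 6) hA (fun s => by rw [hu' s]; ring)
  obtain ⟨V, hV, hV'⟩ := aux_int 5 (fun s => B s + k1 / 60 * s ^ 5) (fun s => b s + k1 / 12 * s ^ 4)
    (fun s => v s * s ^ 0) (by fun_prop) 0 1 0 (-k0 / 6) (fun s => by
      refine ((hB s).add ((hasDerivAt_pow 5 s).const_mul (k1 / 60))).congr_deriv ?_
      norm_num
      ring)
    (fun s => by rw [hv' s]; ring)
  simp only [A0, B0] at hU' hV'
  have hV'' : ∀ s, B s = 1 / 2 * s ^ 2 - k0 / 24 * s ^ 4 - k1 / 60 * s ^ 5 + s ^ 6 * V s := by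
    intro s
    linear_combination hV' s
  refine ⟨fun s => 1 - k0 / 6 * s ^ 2 - k1 / 12 * s ^ 3 + s ^ 4 * v s,
    fun s => (v s / 2 + U s + (- k0 / 6 - k1 / 12 * s + s ^ 2 * v s)
        * (-5 * k0 / 24 - 7 * k1 / 120 * s + s ^ 2 * U s))
      - ((- (k2 - k0 * k0 / 2) / 12 + s * u s) / 2 + V s
        + (- k0 / 2 - k1 / 6 * s + s ^ 2 * (- (k2 - k0 * k0 / 2) / 12 + s * u s))
        * (- k0 / 24 - k1 / 60 * s + s ^ 2 * V s)), by fun_prop, by fun_prop, by simp, ?_, ?_⟩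
  · intro s
    rw [hv' s]
    ring
  · intro s
    rw [hv' s, hu' s, hV'' s, hU' s]
    ring

theorem aux_inv (G ρ : ℝ → ℝ) (c3 c4 ε : ℝ) (hε : 0 < ε)
    (hρ : ContDiffOn ℝ (⊤ : ℕ∞) ρ (Set.Ioo (-ε) ε))
    (hG : ∀ t ∈ Set.Ioo (-ε) ε, G t = t / 2 + c3 * t ^ 3 + c4 * t ^ 4 + t ^ 5 * ρ t) :
    ∃ δ > (0 : ℝ), ∃ τ : ℝ → ℝ,
      (∀ t ∈ Set.Ioo (-δ) δ, ContDiffAt ℝ (⊤ : ℕ∞) τ t) ∧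
      τ 0 = 0 ∧ HasDerivAt τ (-1) 0 ∧
      (∀ t ∈ Set.Ioo (-δ) δ, G t = -G (τ t)) ∧
      (fun t : ℝ => τ t - (-t - 4 * c4 * t ^ 4)) =o[𝓝 0] fun t : ℝ => t ^ 5 := by
  have h0I : (0:ℝ) ∈ Set.Ioo (-ε) ε := ⟨by linarith, hε⟩
  have hIn : ∀ t ∈ Set.Ioo (-ε) ε, Set.Ioo (-ε) ε ∈ 𝓝 t := fun t ht => isOpen_Ioo.mem_nhds ht
  have hGc : ContDiffOn ℝ (⊤ : ℕ∞) G (Set.Ioo (-ε) ε) := by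
    refine ContDiffOn.congr (f := fun t => t / 2 + c3 * t ^ 3 + c4 * t ^ 4 + t ^ 5 * ρ t) ?_ hG
    fun_prop
  have hGat : ∀ t ∈ Set.Ioo (-ε) ε, ContDiffAt ℝ (⊤ : ℕ∞) G t := fun t ht =>
    hGc.contDiffAt (hIn t ht)
  have hG0 : G 0 = 0 := by rw [hG 0 h0I]; simp
  have hρ0 : DifferentiableAt ℝ ρ 0 := (hρ.contDiffAt (hIn 0 h0I)).differentiableAt (by simp)
  have hGd : HasDerivAt G (1 / 2) 0 := by
    have h1 : HasDerivAt (fun t => t / 2 + c3 * t ^ 3 + c4 * t ^ 4 + t ^ 5 * ρ t) (1 / 2) 0 := by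
      refine (((((hasDerivAt_id (0:ℝ)).div_const 2).add ((hasDerivAt_pow 3 (0:ℝ)).const_mul c3)).add
        ((hasDerivAt_pow 4 (0:ℝ)).const_mul c4)).add
        ((hasDerivAt_pow 5 (0:ℝ)).mul hρ0.hasDerivAt)).congr_deriv ?_
      simp
    refine h1.congr_of_eventuallyEq ?_
    filter_upwards [hIn 0 h0I] with t ht using hG t ht
  have hGs : HasStrictDerivAt G (1 / 2) 0 := (hGat 0 h0I).hasStrictDerivAt' hGd (by simp)
  have hne : (1 / 2 : ℝ) ≠ 0 := by norm_num
  have hfs := hGs.hasStrictFDerivAt_equiv hne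
  obtain ⟨e, he, hs0, hest⟩ : ∃ e : OpenPartialHomeomorph ℝ ℝ, (e : ℝ → ℝ) = G ∧
      (0:ℝ) ∈ e.source ∧ HasStrictDerivAt e.symm (1 / 2)⁻¹ 0 := by
    refine ⟨hfs.toOpenPartialHomeomorph G, rfl, hfs.mem_toOpenPartialHomeomorph_source, ?_⟩
    have := hGs.to_localInverse hne
    rw [hG0] at this
    exact this
  have ht0 : (0:ℝ) ∈ e.target := by
    have := e.map_source hs0
    rwa [he, hG0] at this
  have hes0 : e.symm 0 = 0 := by
    have := e.left_inv hs0
    rwa [he, hG0] at this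
  have hGcont : ContinuousAt G 0 := hGd.continuousAt
  have hmG : Tendsto (fun t => -G t) (𝓝 0) (𝓝 0) := by
    have := hGcont.tendsto.neg
    simpa only [hG0, neg_zero] using this
  have hτd : HasDerivAt (fun t => e.symm (-G t)) (-1) 0 := by
    have h2 : HasDerivAt e.symm (1 / 2)⁻¹ (-G 0) := by
      rw [hG0, neg_zero]; exact hest.hasDerivAt
    refine (h2.comp 0 hGd.neg).congr_deriv ?_
    norm_num
  have hτ0 : e.symm (-G 0) = 0 := by rw [hG0, neg_zero, hes0]
  have hτt : Tendsto (fun t => e.symm (-G t)) (𝓝 0) (𝓝 0) := by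
    have := hτd.continuousAt.tendsto
    simpa only [hτ0] using this
  have hdc : ContinuousAt (deriv G) 0 :=
    (hGc.continuousOn_deriv_of_isOpen isOpen_Ioo (by simp)).continuousAt (hIn 0 h0I)
  have hdne : ∀ᶠ t in 𝓝 (0:ℝ), deriv G t ≠ 0 :=
    hdc.eventually_ne (by rw [hGd.deriv]; norm_num)
  have hev : ∀ᶠ t in 𝓝 (0:ℝ), t ∈ Set.Ioo (-ε) ε ∧ -G t ∈ e.target ∧
      e.symm (-G t) ∈ Set.Ioo (-ε) ε ∧ deriv G (e.symm (-G t)) ≠ 0 :=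
    Filter.Eventually.and (hIn 0 h0I)
      ((hmG.eventually (e.open_target.mem_nhds ht0)).and
        ((hτt.eventually (hIn 0 h0I)).and (hτt.eventually hdne)))
  obtain ⟨δ, hδ, hδ'⟩ := Metric.eventually_nhds_iff.1 hev
  have hδ'' : ∀ t ∈ Set.Ioo (-δ) δ, t ∈ Set.Ioo (-ε) ε ∧ -G t ∈ e.target ∧
      e.symm (-G t) ∈ Set.Ioo (-ε) ε ∧ deriv G (e.symm (-G t)) ≠ 0 := fun t ht =>
    hδ' (by rw [Real.dist_eq, sub_zero]; exact abs_lt.2 ht)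
  refine ⟨δ, hδ, fun t => e.symm (-G t), ?_, hτ0, hτd, ?_, ?_⟩
  · intro t ht
    obtain ⟨h1, h2, h3, h4⟩ := hδ'' t ht
    have h5 := hGat _ h3
    have h6 : HasDerivAt G (deriv G (e.symm (-G t))) (e.symm (-G t)) :=
      (h5.differentiableAt (by simp)).hasDerivAt
    have h7 : ContDiffAt ℝ (⊤ : ℕ∞) e.symm (-G t) :=
      e.contDiffAt_symm_deriv h4 h2 (by rw [he]; exact h6) (by rw [he]; exact h5)
    exact h7.comp t (hGat t h1).neg
  · intro t ht
    obtain ⟨h1, h2, h3, h4⟩ := hδ'' t ht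
    have := e.right_inv h2
    rw [he] at this
    simp only [this, neg_neg]
  · set E : ℝ → ℝ := fun t => -t - 4 * c4 * t ^ 4 with hE
    have hEc : Continuous E := by fun_prop
    have hEt : Tendsto E (𝓝 0) (𝓝 0) := by
      have := hEc.tendsto 0
      simpa [hE] using this
    have hGE : Tendsto (fun t => G (E t)) (𝓝 0) (𝓝 0) := by
      have := hGcont.tendsto.comp hEt
      simpa [hG0, Function.comp_def] using this
    have hO : (fun t => e.symm (-G t) - e.symm (G (E t))) =O[𝓝 0] fun t => -G t - G (E t) := by
      have h1 := hest.hasStrictFDerivAt.isBigO_sub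
      have h2 : Tendsto (fun t => (-G t, G (E t))) (𝓝 0) (𝓝 ((0:ℝ), (0:ℝ))) :=
        hmG.prodMk_nhds hGE
      exact h1.comp_tendsto h2
    have hO' : (fun t => e.symm (-G t) - E t) =O[𝓝 0] fun t => -G t - G (E t) := by
      refine hO.congr' ?_ EventuallyEq.rfl
      filter_upwards [hEt.eventually (e.open_source.mem_nhds hs0)] with t ht
      have := e.left_inv ht
      rw [he] at this
      rw [this]
    refine hO'.trans_isLittleO ?_
    set w : ℝ → ℝ := fun t => -(c3 * t * (-4 * c4) * (3 - 3 * (-4 * c4) * t ^ 3 + (-4 * c4) ^ 2 * t ^ 6)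
      + c4 * t ^ 2 * (-4 * (-4 * c4) + 6 * (-4 * c4) ^ 2 * t ^ 3 - 4 * (-4 * c4) ^ 3 * t ^ 6
        + (-4 * c4) ^ 4 * t ^ 9)
      + ρ t - (1 - (-4 * c4) * t ^ 3) ^ 5 * ρ (E t)) with hw
    have hρc : ContinuousAt ρ 0 := hρ0.continuousAt
    have hw0 : Tendsto w (𝓝 0) (𝓝 0) := by
      have hE0 : E 0 = 0 := by simp [hE]
      have h1 : ContinuousAt (fun t => ρ (E t)) 0 :=
        ContinuousAt.comp (g := ρ) (by rw [hE0]; exact hρc) hEc.continuousAt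
      have h2 : ContinuousAt w 0 := by
        rw [hw]
        refine ContinuousAt.neg (ContinuousAt.sub (ContinuousAt.add ?_ hρc) (ContinuousAt.mul ?_ h1))
        · fun_prop
        · fun_prop
      have h3 := h2.tendsto
      have h4 : w 0 = 0 := by simp [hw, hE0]
      rwa [h4] at h3
    have h1 : (fun t => w t * t ^ 5) =o[𝓝 0] fun t : ℝ => (1:ℝ) * t ^ 5 :=
      ((Asymptotics.isLittleO_one_iff ℝ).2 hw0).mul_isBigO (Asymptotics.isBigO_refl _ _)
    refine h1.congr' ?_ (by simp)
    filter_upwards [hIn 0 h0I, hEt.eventually (hIn 0 h0I)] with t ht1 ht2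
    rw [hG t ht1, hG (E t) ht2, hw]
    simp only [hE]
    ring

theorem om_hasDeriv {u v : ℝ → ℝ × ℝ} {u' v' : ℝ × ℝ} {t : ℝ} (hu : HasDerivAt u u' t)
    (hv : HasDerivAt v v' t) :
    HasDerivAt (fun t => om (u t) (v t)) (om u' (v t) + om (u t) v') t := by
  have f1 : ∀ {w : ℝ → ℝ × ℝ} {w' : ℝ × ℝ}, HasDerivAt w w' t →
      HasDerivAt (fun t => (w t).1) w'.1 t := fun h => by
    exact (hasFDerivAt_fst (𝕜 := ℝ)).comp_hasDerivAt t h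
  have f2 : ∀ {w : ℝ → ℝ × ℝ} {w' : ℝ × ℝ}, HasDerivAt w w' t →
      HasDerivAt (fun t => (w t).2) w'.2 t := fun h => by
    exact (hasFDerivAt_snd (𝕜 := ℝ)).comp_hasDerivAt t h
  refine (((f1 hu).mul (f2 hv)).sub ((f2 hu).mul (f1 hv))).congr_deriv ?_
  simp only [om]
  ring

theorem stmt_10 (x : ℝ → ℝ × ℝ) (hx : ContDiff ℝ (⊤ : ℕ∞) x)
    (haff : ∀ s : ℝ, om (deriv x s) (iteratedDeriv 2 x s) = 1)
    (k : ℝ → ℝ) (hk : ∀ s : ℝ, k s = om (iteratedDeriv 2 x s) (iteratedDeriv 3 x s))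
    (s₀ : ℝ) (G : ℝ → ℝ)
    (hG : ∀ s : ℝ, G s = om (deriv x s) (x s - x s₀) / om (deriv x s) (deriv x s₀)) :
    ∃ δ > (0 : ℝ), ∃ τ : ℝ → ℝ,
      ContDiffOn ℝ (⊤ : ℕ∞) τ (Set.Ioo (s₀ - δ) (s₀ + δ)) ∧
      τ s₀ = s₀ ∧ deriv τ s₀ = -1 ∧
      (∀ s ∈ Set.Ioo (s₀ - δ) (s₀ + δ), G s = -G (τ s)) ∧
      (fun s : ℝ => τ s - (2 * s₀ - s - (8 / 120) * deriv k s₀ * (s - s₀) ^ 4))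
        =o[𝓝 s₀] fun s : ℝ => (s - s₀) ^ 5 := by
  have i2 : iteratedDeriv 2 x = deriv (deriv x) := by
    rw [iteratedDeriv_succ, iteratedDeriv_one]
  have i3 : iteratedDeriv 3 x = deriv (deriv (deriv x)) := by
    rw [iteratedDeriv_succ, i2]
  rw [i2] at haff hk
  rw [i3] at hk
  obtain ⟨dx, hd1⟩ := contDiff_infty_iff_deriv.1 hx
  obtain ⟨dd1, hd2⟩ := contDiff_infty_iff_deriv.1 hd1
  obtain ⟨dd2, hd3⟩ := contDiff_infty_iff_deriv.1 hd2
  have D0 : ∀ s, HasDerivAt x (deriv x s) s := fun s => (dx s).hasDerivAt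
  have D1 : ∀ s, HasDerivAt (deriv x) (deriv (deriv x) s) s := fun s => (dd1 s).hasDerivAt
  have D2 : ∀ s, HasDerivAt (deriv (deriv x)) (deriv (deriv (deriv x)) s) s :=
    fun s => (dd2 s).hasDerivAt
  generalize deriv (deriv (deriv x)) = d3 at *
  generalize deriv (deriv x) = d2 at *
  generalize deriv x = d1 at *
  have hks : ContDiff ℝ (⊤ : ℕ∞) k := by
    rw [show k = fun s => om (d2 s) (d3 s) from funext hk]
    exact om_contDiff hd2 hd3
  -- structure equation
  have hz : ∀ s, om (d1 s) (d3 s) = 0 := by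
    intro s
    have h1 := om_hasDeriv (D1 s) (D2 s)
    rw [show (fun t => om (d1 t) (d2 t)) = fun _ => (1:ℝ) from funext haff] at h1
    have h2 := h1.unique (hasDerivAt_const s (1:ℝ))
    simp only [om] at h2 ⊢
    linarith
  have hse : ∀ s, d3 s = -(k s) • d1 s := by
    intro s
    have h1 := haff s
    have h2 := hz s
    have h3 := hk s
    simp only [om] at h1 h2 h3
    ext
    · simp only [Prod.smul_fst, smul_eq_mul]
      linear_combination (- (d3 s).1) * h1 + (d2 s).1 * h2 + (d1 s).1 * h3
    · simp only [Prod.smul_snd, smul_eq_mul]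
      linear_combination (- (d3 s).2) * h1 + (d2 s).2 * h2 + (d1 s).2 * h3
  have sh : ∀ {f : ℝ → ℝ × ℝ} {f' : ℝ × ℝ} (t : ℝ), HasDerivAt f f' (s₀ + t) →
      HasDerivAt (fun t => f (s₀ + t)) f' t := fun t h => h.comp_const_add s₀ t
  have cl : ∀ {f : ℝ → ℝ × ℝ} {f' : ℝ × ℝ} {t : ℝ} (c : ℝ × ℝ), HasDerivAt f f' t →
      HasDerivAt (fun t => om (f t) c) (om f' c) t := fun c h =>
    (om_hasDeriv h (hasDerivAt_const _ c)).congr_deriv (by simp [om])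
  have cr : ∀ {f : ℝ → ℝ × ℝ} {f' : ℝ × ℝ} {t : ℝ} (c : ℝ × ℝ), HasDerivAt f f' t →
      HasDerivAt (fun t => om c (f t)) (om c f') t := fun c h =>
    (om_hasDeriv (hasDerivAt_const _ c) h).congr_deriv (by simp [om])
  have h1s : ContDiff ℝ (⊤ : ℕ∞) (fun t => d1 (s₀ + t)) := by fun_prop
  have hw0 := haff s₀
  obtain ⟨β, R, hβ, hR, hβ0, hb, hab⟩ := aux_core (fun t => k (s₀ + t))
    (fun t => om (d1 (s₀ + t)) (d2 s₀)) (fun t => om (d2 (s₀ + t)) (d2 s₀))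
    (fun t => om (x (s₀ + t) - x s₀) (d2 s₀))
    (fun t => om (d1 s₀) (d1 (s₀ + t))) (fun t => om (d1 s₀) (d2 (s₀ + t)))
    (fun t => om (d1 s₀) (x (s₀ + t) - x s₀))
    (by fun_prop) (om_contDiff h1s contDiff_const) (om_contDiff contDiff_const h1s)
    (fun t => cl _ (sh t (D1 _)))
    (fun t => (cl _ (sh t (D2 _))).congr_deriv (by rw [hse]; simp [om]; ring))
    (fun t => cr _ (sh t (D1 _)))
    (fun t => (cr _ (sh t (D2 _))).congr_deriv (by rw [hse]; simp [om]; ring))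
    (fun t => cl _ ((sh t (D0 _)).sub_const _))
    (fun t => cr _ ((sh t (D0 _)).sub_const _))
    (by simpa using hw0) (by simp [om]; ring) (by simp [om]; ring) (by simpa using hw0)
    (by simp [om]) (by simp [om])
  rw [deriv_comp_const_add] at hab
  simp only [add_zero] at hab
  have hβe : ∀ᶠ t in 𝓝 (0:ℝ), β t ≠ 0 :=
    hβ.continuous.continuousAt.eventually_ne (by rw [hβ0]; norm_num)
  obtain ⟨ε, hε, hε'⟩ := Metric.eventually_nhds_iff.1 hβe
  have hε'' : ∀ t ∈ Set.Ioo (-ε) ε, β t ≠ 0 := fun t ht =>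
    hε' (by rw [Real.dist_eq, sub_zero]; exact abs_lt.2 ht)
  obtain ⟨δ, hδ, τ, hτ1, hτ2, hτ3, hτ4, hτ5⟩ := aux_inv (fun t => G (s₀ + t))
    (fun t => R t / β t) (k s₀ / 24) (deriv k s₀ / 60) ε hε
    (hR.contDiffOn.div hβ.contDiffOn hε'') (by
      intro t ht
      have hβt := hε'' t ht
      simp only [hG]
      have e1 : om (d1 (s₀ + t)) (d1 s₀) = -(t * β t) := by
        rw [← hb t]; simp only [om]; ring
      have e2 : om (d1 (s₀ + t)) (x (s₀ + t) - x s₀) =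
          -(t * β t * (t / 2 + k s₀ / 24 * t ^ 3 + deriv k s₀ / 60 * t ^ 4) + t ^ 6 * R t) := by
        rw [← hab t]
        simp only [om] at hw0 ⊢
        linear_combination (-((d1 (s₀ + t)).1 * (x (s₀ + t) - x s₀).2
          - (d1 (s₀ + t)).2 * (x (s₀ + t) - x s₀).1)) * hw0
      rw [e1, e2]
      rcases eq_or_ne t 0 with rfl | h0
      · simp
      · field_simp)
  have hsub : ∀ s ∈ Set.Ioo (s₀ - δ) (s₀ + δ), s - s₀ ∈ Set.Ioo (-δ) δ := fun s hs =>
    ⟨by linarith [hs.1], by linarith [hs.2]⟩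
  refine ⟨δ, hδ, fun s => s₀ + τ (s - s₀), ?_, ?_, ?_, ?_, ?_⟩
  · intro s hs
    have h1 := hτ1 _ (hsub s hs)
    have h2 : ContDiffAt ℝ (⊤ : ℕ∞) (fun s => τ (s - s₀)) s :=
      h1.comp s (contDiffAt_id.sub contDiffAt_const)
    exact (contDiffAt_const.add h2).contDiffWithinAt
  · simp [hτ2]
  · have h1 : HasDerivAt τ (-1) (s₀ - s₀) := by simpa using hτ3
    exact ((h1.comp_sub_const s₀ s₀).const_add s₀).deriv
  · intro s hs
    have := hτ4 _ (hsub s hs)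
    simpa using this
  · have ht : Tendsto (fun s => s - s₀) (𝓝 s₀) (𝓝 0) := by
      have : Continuous fun s : ℝ => s - s₀ := by fun_prop
      simpa using this.tendsto s₀
    have h1 := hτ5.comp_tendsto ht
    refine h1.congr_left fun s => ?_
    simp only [Function.comp]
    ring
end
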